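/- arXiv:0707.2424 — 2 statements merged into one kernel-verified Lean document; each statement's English description precedes it below -/
import Mathlib

section
/- Let u ∈ W^{1,2}_{loc}(ℝⁿ) satisfy ∫_{ℝⁿ} u² dμ = 1, where dμ = (2π)^{-n/2} e^{-|x|²/2} dx is the standard Gaussian measure. Then ∫_{ℝⁿ} u² ln u² dμ ≤ 2 ∫_{ℝⁿ} |∇u|² dμ. -/
open MeasureTheory Real

/-!
The proof has two independent ingredients: the inequality on the line, by mass transport, and the
subadditivity of entropy, which lifts it to `ℝⁿ`. Entropy is measured by the Bregman divergence
`D(a, b) = a log a - a log b - a + b ≥ 0` of `t log t` (`breg`): for `m = ∫ f dμ`, the entropy of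
`f` is `∫ D(f, m) dμ`. The integrand is nonnegative, so this is a Lebesgue integral with values in
`[0, ∞]`, and it makes sense without any integrability assumption on `f log f`.

*The line.* First let `u` have no zero and work on `[-R, R]`, with Gaussian density `φ` and with
`s` the mean of `u²` there. Let `T` be the increasing map of `[-R, R]` onto itself which transports
`u² φ / s` to `φ` (`exists_transport`). Then `u² φ / s = φ(T) T'`, so with `θ = T - x`
`log (u² / s) = log T' + (x² - T²) / 2 ≤ θ' - x θ - θ² / 2`.
Multiplying by `u² φ` and completing a square, `u² φ log (u² / s) ≤ (u² θ φ)' + 2 u'² φ`. The exact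
derivative integrates to zero because `T` fixes both endpoints (`interval_lsi`). For general `u`,
apply this to `√(u² + ε)` with `R → ∞` and `ε → 0`, and use Fatou's lemma (`lsi_real`).

*Dimension `n`.* For a function on a product space, `D(f, m)` splits into the divergence from the
partial mean `g(y) = ∫ f(x, y) dμ(x)` plus `D(g, m)` (`breg_recenter`). Joint convexity of `D`, in
the form of Jensen's inequality (`jensen_breg`), bounds `∫ D(g, m)` by the mean entropy in the
other variable (`entropy_tensor`). Induction on the dimension gives the inequality for products of
one-dimensional Gaussians (`lsi_pi`). Restrictions of a differentiable function to lines are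
differentiable, so no regularisation in `ℝⁿ` is needed.
-/

namespace GaussianLSI

open ProbabilityTheory Set Filter Topology

/-! ### The Bregman divergence and the Gaussian density -/

/-- The Bregman divergence `D(a, b) = a log (a / b) - a + b` of `t ↦ t log t`, for `a, b ≥ 0`. The
logarithm of the quotient is split so that `D(0, b) = b` and `D(0, 0) = 0` hold and `a ↦ D(a, b)`
is continuous for `b > 0`. -/
noncomputable def breg (a b : ℝ) : ℝ := a * log a - a * log b - a + b

/-- The density of the standard Gaussian measure on the line. -/
noncomputable def φ (x : ℝ) : ℝ := gaussianPDFReal 0 1 x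

lemma φ_pos (x : ℝ) : 0 < φ x := gaussianPDFReal_pos 0 1 x one_ne_zero

lemma φ_hasDerivAt (x : ℝ) : HasDerivAt φ (-x * φ x) x := by
  have h : HasDerivAt (fun x : ℝ => (√(2 * π))⁻¹ * rexp (-x ^ 2 / 2))
      ((√(2 * π))⁻¹ * (rexp (-x ^ 2 / 2) * (-((2 : ℕ) * x ^ (2 - 1)) / 2))) x :=
    (((hasDerivAt_pow 2 x).neg.div_const 2).exp).const_mul _
  have e : φ = fun x : ℝ => (√(2 * π))⁻¹ * rexp (-x ^ 2 / 2) := by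
    funext y; simp [φ, gaussianPDFReal]
  rw [e]
  convert h using 1
  push_cast
  ring

lemma φ_continuous : Continuous φ :=
  continuous_iff_continuousAt.2 fun x => (φ_hasDerivAt x).continuousAt

lemma log_φ_sub (x y : ℝ) : log (φ x) - log (φ y) = (y ^ 2 - x ^ 2) / 2 := by
  have e : ∀ x, log (φ x) = log ((√(2 * π))⁻¹) - x ^ 2 / 2 := by
    intro x
    have : φ x = (√(2 * π))⁻¹ * rexp (-x ^ 2 / 2) := by simp [φ, gaussianPDFReal]
    rw [this, log_mul (by positivity) (by positivity), log_exp]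
    ring
  rw [e, e]; ring

/-- The tangent-plane inequality of the divergence at `(A, B)`: since `D` is homogeneous of degree
one and jointly convex, it lies above its linearisation. The degenerate cases `A = 0`, `b = 0` hold
because then `a = 0`. -/
lemma breg_bound (a b A B : ℝ) (ha : 0 ≤ a) (hb : 0 ≤ b) (hA : 0 ≤ A) (hB : 0 < B)
    (hba : b = 0 → a = 0) (hAa : A = 0 → a = 0) :
    a * (log A - log B) + b * (1 - A / B) ≤ breg a b := by
  unfold breg
  rcases ha.eq_or_lt with rfl | ha
  · have : 0 ≤ b * (A / B) := by positivity
    simp only [zero_mul]; linarith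
  have hb : 0 < b := lt_of_le_of_ne hb fun h => ha.ne' (hba h.symm)
  have hA : 0 < A := lt_of_le_of_ne hA fun h => ha.ne' (hAa h.symm)
  have h := log_le_sub_one_of_pos (show 0 < b * A / (a * B) by positivity)
  rw [log_div (by positivity) (by positivity), log_mul hb.ne' hA.ne', log_mul ha.ne' hB.ne'] at h
  have h2 := mul_le_mul_of_nonneg_left h ha.le
  have e : a * (b * A / (a * B) - 1) = b * (A / B) - a := by field_simp
  rw [e] at h2
  linarith

lemma breg_nonneg {a b : ℝ} (ha : 0 ≤ a) (hb : 0 ≤ b) (hba : b = 0 → a = 0) : 0 ≤ breg a b := by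
  rcases hb.eq_or_lt with rfl | hb'
  · simp [breg, hba rfl]
  · simpa using breg_bound a b 1 1 ha hb zero_le_one one_pos hba (by norm_num)

/-! ### The inequality on a bounded interval, by mass transport -/

/-- The increasing transport of the density `f = F'` to `φ` on `[-R, R]`, two densities of equal
mass: it is `G⁻¹ ∘ F` for the primitives `F` and `G` of `f` and `φ` vanishing at `-R`. -/
lemma exists_transport {F f : ℝ → ℝ} {R : ℝ} (hR : 0 < R)
    (hF : ∀ x, HasDerivAt F (f x) x) (hf : ∀ x, 0 < f x) (h0 : F (-R) = 0)
    (h1 : F R = ∫ x in (-R)..R, φ x) :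
    ∃ T : ℝ → ℝ, T (-R) = -R ∧ T R = R ∧
      ∀ x ∈ Icc (-R) R, HasDerivAt T (f x / φ (T x)) x := by
  set G : ℝ → ℝ := fun u => ∫ x in (-R)..u, φ x with hG
  have hGd : ∀ x, HasStrictDerivAt G (φ x) x := fun x =>
    φ_continuous.integral_hasStrictDerivAt _ x
  have hGm : StrictMono G := strictMono_of_deriv_pos fun x => by
    rw [(hGd x).hasDerivAt.deriv]; exact φ_pos x
  have hGc : Continuous G := continuous_iff_continuousAt.2 fun x => (hGd x).hasDerivAt.continuousAt
  have hFm : StrictMono F := strictMono_of_deriv_pos fun x => by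
    rw [(hF x).deriv]; exact hf x
  have hGo : IsOpenMap G := isOpenMap_of_hasStrictDerivAt hGd fun x => (φ_pos x).ne'
  let e := (Topology.IsOpenEmbedding.of_continuous_injective_isOpenMap hGc hGm.injective
    hGo).toOpenPartialHomeomorph
  have hG0 : G (-R) = 0 := by simp [hG]
  have hmem : ∀ x ∈ Icc (-R) R, F x ∈ range G := by
    intro x hx
    have h2 : F x ∈ Icc (G (-R)) (G R) := by
      rw [hG0, ← h0, show G R = F R from h1.symm]
      exact ⟨hFm.monotone hx.1, hFm.monotone hx.2⟩
    obtain ⟨y, -, hy⟩ := intermediate_value_Icc (by linarith : -R ≤ R) hGc.continuousOn h2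
    exact ⟨y, hy⟩
  have hinv : ∀ y, e.symm (G y) = y := fun y => e.left_inv (by simp [e])
  refine ⟨fun x => e.symm (F x), ?_, ?_, ?_⟩
  · show e.symm (F (-R)) = -R
    rw [h0, ← hG0, hinv]
  · show e.symm (F R) = R
    rw [h1]; exact hinv R
  · intro x hx
    have := (e.hasDerivAt_symm (a := F x) (f' := φ (e.symm (F x))) (by simpa [e] using hmem x hx)
      (φ_pos _).ne' (hGd _).hasDerivAt).comp x (hF x)
    exact this.congr_deriv (div_eq_inv_mul _ _).symm

/-- The logarithmic Sobolev inequality for the Gaussian density restricted to `[-R, R]`, for a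
function without zeros. Here `s` is the mean of `u²`. -/
lemma interval_lsi {u : ℝ → ℝ} (hu : Differentiable ℝ u) (hu0 : ∀ x, u x ≠ 0) {R s : ℝ}
    (hR : 0 < R) (hs : 0 < s)
    (hint : IntervalIntegrable (fun x => deriv u x ^ 2) volume (-R) R)
    (hmean : ∫ x in (-R)..R, u x ^ 2 * φ x = s * ∫ x in (-R)..R, φ x) :
    ∫ x in (-R)..R, breg (u x ^ 2) s * φ x ≤ ∫ x in (-R)..R, 2 * deriv u x ^ 2 * φ x := by
  have hle : -R ≤ R := by linarith
  have huc : Continuous u := hu.continuous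
  have hd : IntervalIntegrable (deriv u) volume (-R) R := by
    refine ((intervalIntegrable_const (c := (1 : ℝ))).add hint).mono_fun
      (measurable_deriv u).aestronglyMeasurable (Eventually.of_forall fun x => ?_)
    change ‖deriv u x‖ ≤ ‖1 + deriv u x ^ 2‖
    rw [norm_eq_abs, norm_eq_abs, abs_of_nonneg (by positivity : 0 ≤ 1 + deriv u x ^ 2)]
    exact abs_le.2 ⟨by nlinarith [sq_nonneg (deriv u x + 1)],
      by nlinarith [sq_nonneg (deriv u x - 1)]⟩
  have hfpos : ∀ x, 0 < u x ^ 2 * φ x / s := fun x =>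
    div_pos (mul_pos (pow_pos (abs_pos.2 (hu0 x)) 2 |>.trans_eq (sq_abs _)) (φ_pos x)) hs
  have hfc : Continuous fun x => u x ^ 2 * φ x / s :=
    ((huc.pow 2).mul φ_continuous).div_const s
  obtain ⟨T, hTa, hTb, hT⟩ := exists_transport (F := fun y => ∫ x in (-R)..y, u x ^ 2 * φ x / s)
    (f := fun x => u x ^ 2 * φ x / s) hR
    (fun x => (hfc.integral_hasStrictDerivAt _ x).hasDerivAt) hfpos (by simp)
    (by rw [intervalIntegral.integral_div, hmean]; field_simp)
  set T' : ℝ → ℝ := fun x => u x ^ 2 * φ x / s / φ (T x) with hT'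
  have hTc : ContinuousOn T (Icc (-R) R) := fun x hx => (hT x hx).continuousAt.continuousWithinAt
  have hT'c : ContinuousOn T' (Icc (-R) R) :=
    hfc.continuousOn.div (φ_continuous.comp_continuousOn hTc) fun x _ => (φ_pos _).ne'
  have hT'pos : ∀ x, 0 < T' x := fun x => div_pos (hfpos x) (φ_pos _)
  -- the derivative of `u² (T - x) φ`, a function vanishing at both endpoints
  set K : ℝ → ℝ := fun x => deriv u x * (2 * u x * (T x - x) * φ x) +
    u x ^ 2 * ((T' x - 1) - x * (T x - x)) * φ x with hK
  have hKd : ∀ x ∈ uIcc (-R) R, HasDerivAt (fun x => u x ^ 2 * (T x - x) * φ x) (K x) x := by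
    intro x hx
    rw [uIcc_of_le hle] at hx
    have := (((hu x).hasDerivAt.pow 2).mul ((hT x hx).sub (hasDerivAt_id x))).mul (φ_hasDerivAt x)
    refine this.congr_deriv ?_
    simp only [hK, hT', Pi.mul_apply, Pi.sub_apply, Pi.pow_apply, id]
    push_cast
    ring
  have hKi1 : IntervalIntegrable (fun x => deriv u x * (2 * u x * (T x - x) * φ x))
      volume (-R) R := by
    refine hd.mul_continuousOn ?_
    rw [uIcc_of_le hle]
    have := huc.continuousOn (s := Icc (-R) R)
    have := φ_continuous.continuousOn (s := Icc (-R) R)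
    fun_prop
  have hKi : IntervalIntegrable K volume (-R) R := by
    refine hKi1.add (ContinuousOn.intervalIntegrable ?_)
    rw [uIcc_of_le hle]
    have := huc.continuousOn (s := Icc (-R) R)
    have := φ_continuous.continuousOn (s := Icc (-R) R)
    fun_prop
  have hK0 : ∫ x in (-R)..R, K x = 0 := by
    rw [intervalIntegral.integral_eq_sub_of_hasDerivAt hKd hKi, hTa, hTb]; ring
  have hI2 : IntervalIntegrable (fun x => 2 * deriv u x ^ 2 * φ x) volume (-R) R :=
    (hint.const_mul 2).mul_continuousOn φ_continuous.continuousOn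
  have hI3 : IntervalIntegrable (fun x => s * φ x - u x ^ 2 * φ x) volume (-R) R :=
    Continuous.intervalIntegrable
      ((continuous_const.mul φ_continuous).sub ((huc.pow 2).mul φ_continuous)) _ _
  have h30 : ∫ x in (-R)..R, (s * φ x - u x ^ 2 * φ x) = 0 := by
    rw [intervalIntegral.integral_sub, intervalIntegral.integral_const_mul, hmean, sub_self]
    · exact (continuous_const.mul φ_continuous).intervalIntegrable _ _
    · exact ((huc.pow 2).mul φ_continuous).intervalIntegrable _ _
  have hL : IntervalIntegrable (fun x => breg (u x ^ 2) s * φ x) volume (-R) R := by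
    have hc : Continuous fun x => u x ^ 2 * log (u x ^ 2) :=
      Real.continuous_mul_log.comp (huc.pow 2)
    refine Continuous.intervalIntegrable ?_ _ _
    unfold breg
    exact (((hc.sub ((huc.pow 2).mul continuous_const)).sub (huc.pow 2)).add
      continuous_const).mul φ_continuous
  calc ∫ x in (-R)..R, breg (u x ^ 2) s * φ x
      ≤ ∫ x in (-R)..R, (K x + 2 * deriv u x ^ 2 * φ x + (s * φ x - u x ^ 2 * φ x)) := by
        refine intervalIntegral.integral_mono_on hle hL ((hKi.add hI2).add hI3) fun x hx => ?_
        have hu2 : 0 < u x ^ 2 := by have := hu0 x; positivity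
        -- the logarithm of the Monge-Ampère equation `u² φ / s = φ(T) T'`
        have hlog : log (u x ^ 2) - log s = log (T' x) + (x ^ 2 - T x ^ 2) / 2 := by
          rw [← log_φ_sub (T x) x, hT', log_div (hfpos x).ne' (φ_pos _).ne',
            log_div (mul_pos hu2 (φ_pos x)).ne' hs.ne', log_mul hu2.ne' (φ_pos x).ne']
          ring
        have hl := log_le_sub_one_of_pos (hT'pos x)
        have h1 : u x ^ 2 * (log (u x ^ 2) - log s) ≤
            u x ^ 2 * (T' x - 1 + (x ^ 2 - T x ^ 2) / 2) :=
          mul_le_mul_of_nonneg_left (by linarith) hu2.le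
        have h2 : breg (u x ^ 2) s ≤ deriv u x * (2 * u x * (T x - x)) +
            u x ^ 2 * ((T' x - 1) - x * (T x - x)) + 2 * deriv u x ^ 2 + (s - u x ^ 2) := by
          unfold breg
          -- completing the square in `2 u' + u (T - x)`
          nlinarith [sq_nonneg (2 * deriv u x + u x * (T x - x))]
        calc _ ≤ _ := mul_le_mul_of_nonneg_right h2 (φ_pos x).le
          _ = _ := by simp only [hK]; ring
    _ = ∫ x in (-R)..R, 2 * deriv u x ^ 2 * φ x := by
        rw [intervalIntegral.integral_add (hKi.add hI2) hI3,
          intervalIntegral.integral_add hKi hI2, hK0, h30]; ring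

/-! ### The inequality on the line -/

/-- The standard Gaussian measure on the line. -/
noncomputable def γ : Measure ℝ := gaussianReal 0 1

instance : IsProbabilityMeasure γ := by unfold γ; infer_instance

lemma γ_eq : γ = volume.withDensity fun x => ENNReal.ofReal (φ x) :=
  gaussianReal_of_var_ne_zero 0 one_ne_zero

lemma lintegral_γ {f : ℝ → ℝ} (hf : Measurable f) :
    ∫⁻ x, ENNReal.ofReal (f x) ∂γ = ∫⁻ x, ENNReal.ofReal (f x * φ x) := by
  rw [γ_eq, lintegral_withDensity_eq_lintegral_mul _ φ_continuous.measurable.ennreal_ofReal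
    hf.ennreal_ofReal]
  refine lintegral_congr fun x => ?_
  rw [Pi.mul_apply, ← ENNReal.ofReal_mul (φ_pos x).le, mul_comm]

lemma setIntegral_γ (f : ℝ → ℝ) {R : ℝ} (hR : 0 < R) :
    ∫ x, (Ioc (-R) R).indicator f x ∂γ = ∫ x in (-R)..R, f x * φ x := by
  rw [γ, integral_gaussianReal_eq_integral_smul one_ne_zero,
    intervalIntegral.integral_of_le (by linarith), ← integral_indicator measurableSet_Ioc]
  refine integral_congr_ae (Eventually.of_forall fun x => ?_)
  by_cases hx : x ∈ Ioc (-R) R <;> simp [hx, φ, mul_comm]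

lemma measurable_breg {α : Type*} [MeasurableSpace α] {f g : α → ℝ} (hf : Measurable f)
    (hg : Measurable g) : Measurable fun x => breg (f x) (g x) := by
  unfold breg; fun_prop

/-- `interval_lsi` in terms of the measure `γ` and Lebesgue integrals, with the gradient term
extended to the whole line. -/
lemma interval_step {u : ℝ → ℝ} (hu : Differentiable ℝ u) (hu0 : ∀ x, u x ≠ 0) {R s : ℝ}
    (hR : 0 < R) (hs : s = (∫ x in (-R)..R, u x ^ 2 * φ x) / ∫ x in (-R)..R, φ x)
    (hfin : ∫⁻ x, ENNReal.ofReal (2 * deriv u x ^ 2) ∂γ ≠ ⊤) :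
    ∫⁻ x, (Ioc (-R) R).indicator (fun x => ENNReal.ofReal (breg (u x ^ 2) s)) x ∂γ ≤
      ∫⁻ x, ENNReal.ofReal (2 * deriv u x ^ 2) ∂γ := by
  have hle : -R ≤ R := by linarith
  have huc : Continuous u := hu.continuous
  have hu2 : ∀ x, 0 < u x ^ 2 := fun x => by have := hu0 x; positivity
  have hm : Measurable fun x => 2 * deriv u x ^ 2 := ((measurable_deriv u).pow_const 2).const_mul 2
  have hZ : 0 < ∫ x in (-R)..R, φ x :=
    intervalIntegral.intervalIntegral_pos_of_pos (φ_continuous.intervalIntegrable _ _)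
      φ_pos (by linarith)
  have hA : 0 < ∫ x in (-R)..R, u x ^ 2 * φ x :=
    intervalIntegral.intervalIntegral_pos_of_pos
      (((huc.pow 2).mul φ_continuous).intervalIntegrable _ _)
      (fun x => mul_pos (hu2 x) (φ_pos x)) (by linarith)
  have hspos : 0 < s := hs ▸ div_pos hA hZ
  rw [lintegral_γ hm] at hfin ⊢
  have hI : Integrable fun x => 2 * deriv u x ^ 2 * φ x := by
    refine ⟨(hm.mul φ_continuous.measurable).aestronglyMeasurable, ?_⟩
    rw [hasFiniteIntegral_iff_ofReal
      (Eventually.of_forall fun x => by have := (φ_pos x).le; positivity)]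
    exact lt_top_iff_ne_top.2 hfin
  have hII : IntervalIntegrable (fun x => deriv u x ^ 2) volume (-R) R := by
    have h1 : IntervalIntegrable (fun x => 2 * deriv u x ^ 2 * φ x) volume (-R) R :=
      hI.intervalIntegrable
    have h2 := h1.mul_continuousOn (g := fun x => (2 * φ x)⁻¹)
      ((continuous_const.mul φ_continuous).inv₀
        fun x => (mul_pos two_pos (φ_pos x)).ne').continuousOn
    convert h2 using 2 with x
    have := (φ_pos x).ne'
    field_simp
  have key := interval_lsi hu hu0 hR hspos hII (by rw [hs]; field_simp)
  rw [intervalIntegral.integral_of_le hle, intervalIntegral.integral_of_le hle] at key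
  have hbm : Measurable fun x => breg (u x ^ 2) s :=
    measurable_breg (huc.pow 2).measurable measurable_const
  have hbn : ∀ x, 0 ≤ breg (u x ^ 2) s := fun x =>
    breg_nonneg (hu2 x).le hspos.le fun h => (hspos.ne' h).elim
  have hbi : IntegrableOn (fun x => breg (u x ^ 2) s * φ x) (Ioc (-R) R) := by
    have hc : Continuous fun x => u x ^ 2 * log (u x ^ 2) :=
      Real.continuous_mul_log.comp (huc.pow 2)
    refine (Continuous.integrableOn_Icc ?_).mono_set Ioc_subset_Icc_self
    unfold breg
    exact (((hc.sub ((huc.pow 2).mul continuous_const)).sub (huc.pow 2)).add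
      continuous_const).mul φ_continuous
  calc ∫⁻ x, (Ioc (-R) R).indicator (fun x => ENNReal.ofReal (breg (u x ^ 2) s)) x ∂γ
      = ∫⁻ x, ENNReal.ofReal ((Ioc (-R) R).indicator (fun x => breg (u x ^ 2) s) x) ∂γ := by
        refine lintegral_congr fun x => ?_
        by_cases hx : x ∈ Ioc (-R) R <;> simp [hx]
    _ = ∫⁻ x, ENNReal.ofReal ((Ioc (-R) R).indicator (fun x => breg (u x ^ 2) s) x * φ x) :=
        lintegral_γ (hbm.indicator measurableSet_Ioc)
    _ = ∫⁻ x in Ioc (-R) R, ENNReal.ofReal (breg (u x ^ 2) s * φ x) := by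
        rw [← lintegral_indicator measurableSet_Ioc]
        refine lintegral_congr fun x => ?_
        by_cases hx : x ∈ Ioc (-R) R <;> simp [hx]
    _ = ENNReal.ofReal (∫ x in Ioc (-R) R, breg (u x ^ 2) s * φ x) :=
        (ofReal_integral_eq_lintegral_ofReal hbi
          (Eventually.of_forall fun x => mul_nonneg (hbn x) (φ_pos x).le)).symm
    _ ≤ ENNReal.ofReal (∫ x in Ioc (-R) R, 2 * deriv u x ^ 2 * φ x) :=
        ENNReal.ofReal_le_ofReal key
    _ = ∫⁻ x in Ioc (-R) R, ENNReal.ofReal (2 * deriv u x ^ 2 * φ x) :=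
        ofReal_integral_eq_lintegral_ofReal hI.integrableOn
          (Eventually.of_forall fun x => by have := (φ_pos x).le; positivity)
    _ ≤ _ := setLIntegral_le_lintegral _ _

/-- The logarithmic Sobolev inequality for the standard Gaussian measure on the line; both sides
may be infinite. -/
lemma lsi_real {u : ℝ → ℝ} (hu : Differentiable ℝ u) (hint : Integrable (fun x => u x ^ 2) γ) :
    ∫⁻ x, ENNReal.ofReal (breg (u x ^ 2) (∫ x, u x ^ 2 ∂γ)) ∂γ ≤
      ∫⁻ x, ENNReal.ofReal (2 * deriv u x ^ 2) ∂γ := by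
  set m := ∫ x, u x ^ 2 ∂γ with hm
  have hm0 : 0 ≤ m := integral_nonneg fun x => sq_nonneg _
  rcases hm0.eq_or_lt with h0 | hmpos
  · have := (integral_eq_zero_iff_of_nonneg (fun x => sq_nonneg (u x)) hint).1 h0.symm
    refine le_of_eq_of_le (lintegral_eq_zero_of_ae_eq_zero ?_) zero_le
    filter_upwards [this] with x hx
    simp only [Pi.zero_apply] at hx
    simp [hx, ← h0, breg]
  by_cases hfin : ∫⁻ x, ENNReal.ofReal (2 * deriv u x ^ 2) ∂γ = ⊤
  · rw [hfin]; exact le_top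
  set ε : ℕ → ℝ := fun k => 1 / ((k : ℝ) + 1) with hε
  have hεpos : ∀ k, 0 < ε k := fun k => Nat.one_div_pos_of_nat
  have hεle : ∀ k, ε k ≤ 1 := fun k => by
    rw [hε]; exact div_le_one_of_le₀ (by simp) (by positivity)
  have hεlim : Tendsto ε atTop (𝓝 0) := tendsto_one_div_add_atTop_nhds_zero_nat
  set R : ℕ → ℝ := fun k => (k : ℝ) + 1 with hRdef
  have hR : ∀ k, 0 < R k := fun k => by positivity
  have hRlim : Tendsto R atTop atTop :=
    tendsto_atTop_add_const_right _ _ tendsto_natCast_atTop_atTop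
  have hmem : ∀ x : ℝ, ∀ᶠ k in atTop, x ∈ Ioc (-R k) (R k) := fun x => by
    filter_upwards [hRlim.eventually_gt_atTop |x|] with k hk
    exact ⟨(abs_lt.1 hk).1, (abs_lt.1 hk).2.le⟩
  -- differentiable, free of zeros, and with `|v'| ≤ |u'|`
  set v : ℕ → ℝ → ℝ := fun k x => √(u x ^ 2 + ε k) with hv
  have hpos : ∀ k x, 0 < u x ^ 2 + ε k := fun k x => by have := hεpos k; positivity
  have hvsq : ∀ k x, v k x ^ 2 = u x ^ 2 + ε k := fun k x => sq_sqrt (hpos k x).le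
  have hvd : ∀ k x, HasDerivAt (v k) (u x * deriv u x / v k x) x := fun k x => by
    have h1 : HasDerivAt (fun x => u x ^ 2 + ε k) ((2 : ℕ) * u x ^ (2 - 1) * deriv u x) x :=
      ((hu x).hasDerivAt.pow 2).add_const _
    refine (h1.sqrt (hpos k x).ne').congr_deriv ?_
    have : √(u x ^ 2 + ε k) ≠ 0 := (sqrt_pos.2 (hpos k x)).ne'
    simp only [hv]
    field_simp
    norm_num
    ring
  have hvle : ∀ k, ∫⁻ x, ENNReal.ofReal (2 * deriv (v k) x ^ 2) ∂γ ≤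
      ∫⁻ x, ENNReal.ofReal (2 * deriv u x ^ 2) ∂γ := fun k => by
    refine lintegral_mono fun x => ENNReal.ofReal_le_ofReal ?_
    rw [(hvd k x).deriv, div_pow, mul_pow, hvsq]
    have : u x ^ 2 * deriv u x ^ 2 / (u x ^ 2 + ε k) ≤ deriv u x ^ 2 := by
      rw [div_le_iff₀ (hpos k x)]
      nlinarith [mul_nonneg (hεpos k).le (sq_nonneg (deriv u x))]
    linarith
  set s : ℕ → ℝ := fun k =>
    (∫ x in (-R k)..(R k), v k x ^ 2 * φ x) / ∫ x in (-R k)..(R k), φ x with hs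
  have hstep : ∀ k, ∫⁻ x, (Ioc (-R k) (R k)).indicator
      (fun x => ENNReal.ofReal (breg (v k x ^ 2) (s k))) x ∂γ ≤
      ∫⁻ x, ENNReal.ofReal (2 * deriv u x ^ 2) ∂γ := fun k =>
    (interval_step (fun x => (hvd k x).differentiableAt)
      (fun x => (sqrt_pos.2 (hpos k x)).ne') (hR k) rfl
      ((hvle k).trans_lt (lt_top_iff_ne_top.2 hfin)).ne).trans (hvle k)
  have hslim : Tendsto s atTop (𝓝 m) := by
    have e : ∀ k, s k = (∫ x, (Ioc (-R k) (R k)).indicator (fun x => u x ^ 2 + ε k) x ∂γ) /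
        ∫ x, (Ioc (-R k) (R k)).indicator (fun _ => (1 : ℝ)) x ∂γ := fun k => by
      rw [setIntegral_γ _ (hR k), setIntegral_γ _ (hR k)]
      simp [hs, hvsq]
    have h1 : Tendsto (fun k => ∫ x, (Ioc (-R k) (R k)).indicator (fun x => u x ^ 2 + ε k) x ∂γ)
        atTop (𝓝 m) := by
      refine tendsto_integral_of_dominated_convergence (fun x => u x ^ 2 + 1)
        (fun k => ((hu.continuous.pow 2).add continuous_const).measurable.indicator
          measurableSet_Ioc |>.aestronglyMeasurable) (hint.add (integrable_const 1))
        (fun k => Eventually.of_forall fun x => ?_) (Eventually.of_forall fun x => ?_)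
      · refine (norm_indicator_le_norm_self _ x).trans ?_
        rw [norm_eq_abs, abs_of_pos (hpos k x)]
        linarith [hεle k]
      · have : Tendsto (fun k => u x ^ 2 + ε k) atTop (𝓝 (u x ^ 2)) := by
          simpa using hεlim.const_add (u x ^ 2)
        refine this.congr' ?_
        filter_upwards [hmem x] with k hk
        simp [hk]
    have h2 : Tendsto (fun k => ∫ x, (Ioc (-R k) (R k)).indicator (fun _ => (1 : ℝ)) x ∂γ)
        atTop (𝓝 1) := by
      have : (1 : ℝ) = ∫ _, (1 : ℝ) ∂γ := by simp
      rw [this]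
      refine tendsto_integral_of_dominated_convergence (fun _ => 1)
        (fun k => (measurable_const.indicator measurableSet_Ioc).aestronglyMeasurable)
        (integrable_const 1)
        (fun k => Eventually.of_forall fun x => ?_) (Eventually.of_forall fun x => ?_)
      · refine (norm_indicator_le_norm_self _ x).trans ?_
        simp
      · refine tendsto_const_nhds.congr' ?_
        filter_upwards [hmem x] with k hk
        simp [hk]
    have := h1.div h2 one_ne_zero
    rw [div_one] at this
    exact this.congr fun k => (e k).symm
  have hlim : ∀ x, Tendsto (fun k => (Ioc (-R k) (R k)).indicator
      (fun x => ENNReal.ofReal (breg (v k x ^ 2) (s k))) x) atTop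
      (𝓝 (ENNReal.ofReal (breg (u x ^ 2) m))) := fun x => by
    have h1 : Tendsto (fun k => u x ^ 2 + ε k) atTop (𝓝 (u x ^ 2)) := by
      simpa using hεlim.const_add (u x ^ 2)
    have h2 : Tendsto (fun k => breg (u x ^ 2 + ε k) (s k)) atTop (𝓝 (breg (u x ^ 2) m)) := by
      unfold breg
      exact ((((Real.continuous_mul_log.tendsto _).comp h1).sub
        (h1.mul (hslim.log hmpos.ne'))).sub h1).add hslim
    refine (ENNReal.tendsto_ofReal h2).congr' ?_
    filter_upwards [hmem x] with k hk
    simp [hk, hvsq]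
  calc ∫⁻ x, ENNReal.ofReal (breg (u x ^ 2) m) ∂γ
      = ∫⁻ x, liminf (fun k => (Ioc (-R k) (R k)).indicator
          (fun x => ENNReal.ofReal (breg (v k x ^ 2) (s k))) x) atTop ∂γ :=
        lintegral_congr fun x => (hlim x).liminf_eq.symm
    _ ≤ liminf (fun k => ∫⁻ x, (Ioc (-R k) (R k)).indicator
          (fun x => ENNReal.ofReal (breg (v k x ^ 2) (s k))) x ∂γ) atTop := by
        refine lintegral_liminf_le fun k => Measurable.indicator ?_ measurableSet_Ioc
        refine (measurable_breg ?_ measurable_const).ennreal_ofReal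
        exact ((hu.continuous.measurable.pow_const 2).add_const _).sqrt.pow_const 2
    _ ≤ liminf (fun _ : ℕ => ∫⁻ x, ENNReal.ofReal (2 * deriv u x ^ 2) ∂γ) atTop :=
        liminf_le_liminf (Eventually.of_forall hstep)
    _ = _ := liminf_const _

/-! ### Subadditivity of entropy on product spaces -/

section Tensor

variable {α β : Type*} [MeasurableSpace α] [MeasurableSpace β]

/-- Jensen's inequality for the jointly convex function `D`, by integrating the tangent-plane
inequality at the point of means. -/
lemma jensen_breg {μ : Measure α} {a b : α → ℝ} (ha : Integrable a μ) (hb : Integrable b μ)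
    (ha0 : 0 ≤ a) (hb0 : 0 ≤ b) (hba : ∀ᵐ x ∂μ, b x = 0 → a x = 0) (hB : 0 < ∫ x, b x ∂μ) :
    ENNReal.ofReal (breg (∫ x, a x ∂μ) (∫ x, b x ∂μ)) ≤
      ∫⁻ x, ENNReal.ofReal (breg (a x) (b x)) ∂μ := by
  set A := ∫ x, a x ∂μ with hA
  set B := ∫ x, b x ∂μ with hBdef
  have hA0 : 0 ≤ A := integral_nonneg ha0
  have hAa : ∀ᵐ x ∂μ, A = 0 → a x = 0 := by
    by_cases h : A = 0
    · filter_upwards [(integral_eq_zero_iff_of_nonneg ha0 ha).1 h] with x hx _ using hx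
    · exact Eventually.of_forall fun x hx => (h hx).elim
  have hle : ∀ᵐ x ∂μ, a x * (log A - log B) + b x * (1 - A / B) ≤ breg (a x) (b x) := by
    filter_upwards [hba, hAa] with x h1 h2
    exact breg_bound _ _ _ _ (ha0 x) (hb0 x) hA0 hB h1 h2
  have hLi : Integrable (fun x => a x * (log A - log B) + b x * (1 - A / B)) μ :=
    (ha.mul_const _).add (hb.mul_const _)
  have e : breg A B = ∫ x, (a x * (log A - log B) + b x * (1 - A / B)) ∂μ := by
    rw [integral_add (ha.mul_const _) (hb.mul_const _), integral_mul_const, integral_mul_const,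
      ← hA, ← hBdef]
    unfold breg
    field_simp
    ring
  rw [e]
  calc ENNReal.ofReal (∫ x, (a x * (log A - log B) + b x * (1 - A / B)) ∂μ)
      ≤ ENNReal.ofReal (∫ x, max (a x * (log A - log B) + b x * (1 - A / B)) 0 ∂μ) :=
        ENNReal.ofReal_le_ofReal (integral_mono hLi hLi.pos_part fun x => le_max_left _ _)
    _ = ∫⁻ x, ENNReal.ofReal (max (a x * (log A - log B) + b x * (1 - A / B)) 0) ∂μ :=
        ofReal_integral_eq_lintegral_ofReal hLi.pos_part
          (Eventually.of_forall fun x => le_max_right _ _)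
    _ ≤ _ := by
        refine lintegral_mono_ae ?_
        filter_upwards [hle] with x hx
        simpa [ENNReal.ofReal_max] using ENNReal.ofReal_le_ofReal hx

/-- The Pythagorean property of Bregman divergences: replacing the mean of `a` by another constant
`m` costs the divergence of the mean from `m`. Equality holds, but only this bound is needed. -/
lemma breg_recenter {μ : Measure α} [IsProbabilityMeasure μ] {a : α → ℝ} (ham : Measurable a)
    (ha : Integrable a μ) (ha0 : 0 ≤ a) {m : ℝ} (hm : 0 < m) :
    ∫⁻ x, ENNReal.ofReal (breg (a x) m) ∂μ ≤
      ∫⁻ x, ENNReal.ofReal (breg (a x) (∫ x, a x ∂μ)) ∂μ +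
        ENNReal.ofReal (breg (∫ x, a x ∂μ) m) := by
  set g := ∫ x, a x ∂μ with hg
  by_cases hfin : ∫⁻ x, ENNReal.ofReal (breg (a x) g) ∂μ = ⊤
  · rw [hfin, top_add]; exact le_top
  have hg0 : 0 ≤ g := integral_nonneg ha0
  have hga : ∀ᵐ x ∂μ, g = 0 → a x = 0 := by
    by_cases h : g = 0
    · filter_upwards [(integral_eq_zero_iff_of_nonneg ha0 ha).1 h] with x hx _ using hx
    · exact Eventually.of_forall fun x hx => (h hx).elim
  have hn : ∀ᵐ x ∂μ, 0 ≤ breg (a x) g := by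
    filter_upwards [hga] with x hx using breg_nonneg (ha0 x) hg0 hx
  have hI : Integrable (fun x => breg (a x) g) μ := by
    refine ⟨(measurable_breg ham measurable_const).aestronglyMeasurable, ?_⟩
    rw [hasFiniteIntegral_iff_ofReal hn]
    exact lt_top_iff_ne_top.2 hfin
  have hL : Integrable (fun x => a x * (log g - log m) + (m - g)) μ :=
    (ha.mul_const _).add (integrable_const _)
  have e : ∀ x, breg (a x) m = breg (a x) g + (a x * (log g - log m) + (m - g)) := fun x => by
    unfold breg; ring
  have hm0 : ∀ x, 0 ≤ breg (a x) m := fun x =>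
    breg_nonneg (ha0 x) hm.le fun h => (hm.ne' h).elim
  have hIm : Integrable (fun x => breg (a x) m) μ := by
    simp_rw [e]; exact hI.add hL
  rw [← ofReal_integral_eq_lintegral_ofReal hIm (Eventually.of_forall hm0),
    ← ofReal_integral_eq_lintegral_ofReal hI hn]
  refine le_trans (le_of_eq ?_) ENNReal.ofReal_add_le
  congr 1
  simp_rw [e]
  rw [integral_add hI hL, integral_add (ha.mul_const _) (integrable_const _), integral_mul_const,
    ← hg]
  simp only [integral_const, probReal_univ, one_smul]
  unfold breg; ring

/-- Subadditivity of entropy: the entropy of `f` on a product of probability spaces is at most the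
sum of the mean entropies of its sections in each variable. -/
lemma entropy_tensor {μ : Measure α} {ν : Measure β} [IsProbabilityMeasure μ] [IsProbabilityMeasure ν]
    {f : α × β → ℝ} (hfm : Measurable f) (hf0 : ∀ z, 0 ≤ f z) (hf : Integrable f (μ.prod ν)) :
    ∫⁻ z, ENNReal.ofReal (breg (f z) (∫ z, f z ∂(μ.prod ν))) ∂(μ.prod ν) ≤
      (∫⁻ y, ∫⁻ x, ENNReal.ofReal (breg (f (x, y)) (∫ x, f (x, y) ∂μ)) ∂μ ∂ν) +
      ∫⁻ x, ∫⁻ y, ENNReal.ofReal (breg (f (x, y)) (∫ y, f (x, y) ∂ν)) ∂ν ∂μ := by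
  set m := ∫ z, f z ∂(μ.prod ν) with hm
  have hm0 : 0 ≤ m := integral_nonneg hf0
  rcases hm0.eq_or_lt with h0 | hmpos
  · have := (integral_eq_zero_iff_of_nonneg hf0 hf).1 h0.symm
    refine le_of_eq_of_le (lintegral_eq_zero_of_ae_eq_zero ?_) zero_le
    filter_upwards [this] with x hx
    simp only [Pi.zero_apply] at hx
    simp [hx, ← h0, breg]
  set h : α → ℝ := fun x => ∫ y, f (x, y) ∂ν with hh
  have hhm : Measurable h := hfm.stronglyMeasurable.integral_prod_right'.measurable
  have hhi : Integrable h μ := hf.integral_prod_left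
  have hh0 : 0 ≤ h := fun x => integral_nonneg fun y => hf0 _
  have hmh : m = ∫ x, h x ∂μ := integral_prod f hf
  have hDm : Measurable fun z : α × β => ENNReal.ofReal (breg (f z) (h z.1)) :=
    (measurable_breg hfm (hhm.comp measurable_fst)).ennreal_ofReal
  have hac : ∀ᵐ y ∂ν, ∀ᵐ x ∂μ, h x = 0 → f (x, y) = 0 := by
    have h1 : ∀ᵐ x ∂μ, ∀ᵐ y ∂ν, h x = 0 → f (x, y) = 0 := by
      filter_upwards [hf.prod_right_ae] with x hx
      by_cases hz : h x = 0
      · filter_upwards [(integral_eq_zero_iff_of_nonneg (fun y => hf0 (x, y)) hx).1 hz]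
          with y hy _ using hy
      · exact Eventually.of_forall fun y h' => (hz h').elim
    have hms : MeasurableSet {z : α × β | h z.1 = 0 → f z = 0} := by
      have a1 : MeasurableSet {z : α × β | h z.1 = 0} :=
        (hhm.comp measurable_fst) (measurableSet_singleton 0)
      have a2 : MeasurableSet {z : α × β | f z = 0} := hfm (measurableSet_singleton 0)
      exact a1.imp a2
    exact (Measure.ae_ae_comm hms).1 h1
  rw [lintegral_prod_symm _ (measurable_breg hfm measurable_const).ennreal_ofReal.aemeasurable]
  have hsw : ∫⁻ x, ∫⁻ y, ENNReal.ofReal (breg (f (x, y)) (h x)) ∂ν ∂μ =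
      ∫⁻ y, ∫⁻ x, ENNReal.ofReal (breg (f (x, y)) (h x)) ∂μ ∂ν :=
    lintegral_lintegral_swap hDm.aemeasurable
  rw [hsw, ← lintegral_add_right _ hDm.lintegral_prod_left']
  refine lintegral_mono_ae ?_
  filter_upwards [hac, hf.prod_left_ae] with y hy hyi
  refine (breg_recenter (hfm.comp measurable_prodMk_right) hyi (fun x => hf0 _) hmpos).trans ?_
  refine add_le_add le_rfl ?_
  have := jensen_breg (b := h) hyi hhi (fun x => hf0 _) hh0 hy (hmh ▸ hmpos)
  rwa [← hmh] at this

end Tensor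

/-! ### The inequality for product Gaussian measures -/

lemma lsi_pi (n : ℕ) : ∀ u : (Fin n → ℝ) → ℝ, Differentiable ℝ u →
    Integrable (fun x => u x ^ 2) (Measure.pi fun _ => γ) →
    ∫⁻ x, ENNReal.ofReal (breg (u x ^ 2) (∫ x, u x ^ 2 ∂Measure.pi fun _ => γ))
        ∂(Measure.pi fun _ => γ) ≤
      ∫⁻ x, ENNReal.ofReal (2 * ∑ i, fderiv ℝ u x (Pi.single i 1) ^ 2)
        ∂(Measure.pi fun _ => γ) := by
  induction n with
  | zero =>
    intro u _ _
    have e : ∀ x, u x = u default := fun x => congrArg u (Subsingleton.elim _ _)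
    simp_rw [e]
    simp [breg]
  | succ n ih =>
    intro u hu hint
    let e := (MeasurableEquiv.piFinSuccAbove (fun _ : Fin (n + 1) => ℝ) 0).symm
    have he : ∀ t y, e (t, y) = Fin.cons t y := fun t y => by
      simp [e, MeasurableEquiv.piFinSuccAbove]
      rfl
    have mp : MeasurePreserving e (γ.prod (Measure.pi fun _ : Fin n => γ))
        (Measure.pi fun _ : Fin (n + 1) => γ) :=
      (measurePreserving_piFinSuccAbove (fun _ => γ) 0).symm
    have hum : Measurable u := hu.continuous.measurable
    rw [← mp.lintegral_comp_emb e.measurableEmbedding,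
      ← mp.lintegral_comp_emb e.measurableEmbedding,
      ← mp.integral_comp e.measurableEmbedding]
    have hint' : Integrable (fun z => u (e z) ^ 2) (γ.prod (Measure.pi fun _ : Fin n => γ)) :=
      (mp.integrable_comp_emb e.measurableEmbedding).2 hint
    refine (entropy_tensor (f := fun z => u (e z) ^ 2) ((hum.comp e.measurable).pow_const 2)
      (fun z => sq_nonneg _) hint').trans ?_
    have hd0 : ∀ t y, HasDerivAt (fun t => u (e (t, y)))
        (fderiv ℝ u (e (t, y)) (Pi.single 0 1)) t := fun t y => by
      simp_rw [he]
      refine (hu _).hasFDerivAt.comp_hasDerivAt t (hasDerivAt_pi.2 fun i => ?_)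
      refine Fin.cases ?_ (fun j => ?_) i
      · simpa using hasDerivAt_id' t
      · simpa using hasDerivAt_const t (y j)
    -- the derivative of `y ↦ Fin.cons t y`
    let L : (Fin n → ℝ) →L[ℝ] (Fin (n + 1) → ℝ) := ContinuousLinearMap.pi
      (Fin.cons 0 fun j => ContinuousLinearMap.proj j)
    have hL : ∀ i, L (Pi.single i 1) = Pi.single i.succ 1 := fun i => by
      funext j
      refine Fin.cases ?_ (fun j => ?_) j
      · simp [L]
      · simp [L, Pi.single_apply]
    have hd1 : ∀ t y, HasFDerivAt (fun y => u (e (t, y)))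
        ((fderiv ℝ u (e (t, y))).comp L) y := fun t y => by
      simp_rw [he]
      refine (hu _).hasFDerivAt.comp y (hasFDerivAt_pi.2 fun i => ?_)
      refine Fin.cases ?_ (fun j => ?_) i
      · simpa using hasFDerivAt_const t y
      · simpa using hasFDerivAt_apply j y
    have hDm : ∀ v, Measurable fun z => fderiv ℝ u (e z) v := fun v =>
      (measurable_fderiv_apply_const ℝ u v).comp e.measurable
    have hA : Measurable fun z => ENNReal.ofReal (2 * fderiv ℝ u (e z) (Pi.single 0 1) ^ 2) :=
      (((hDm _).pow_const 2).const_mul 2).ennreal_ofReal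
    have hB : Measurable fun z => ENNReal.ofReal
        (2 * ∑ i : Fin n, fderiv ℝ u (e z) (Pi.single i.succ 1) ^ 2) :=
      ((Finset.measurable_fun_sum _ fun i _ => (hDm _).pow_const 2).const_mul 2).ennreal_ofReal
    have h1 : ∫⁻ y, ∫⁻ t, ENNReal.ofReal (breg (u (e (t, y)) ^ 2) (∫ t, u (e (t, y)) ^ 2 ∂γ)) ∂γ
          ∂(Measure.pi fun _ : Fin n => γ) ≤
        ∫⁻ z, ENNReal.ofReal (2 * fderiv ℝ u (e z) (Pi.single 0 1) ^ 2)
          ∂(γ.prod (Measure.pi fun _ : Fin n => γ)) := by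
      rw [lintegral_prod_symm _ hA.aemeasurable]
      refine lintegral_mono_ae ?_
      filter_upwards [hint'.prod_left_ae] with y hy
      refine (lsi_real (fun t => (hd0 t y).differentiableAt) hy).trans (le_of_eq ?_)
      simp_rw [fun t => (hd0 t y).deriv]
    have h2 : ∫⁻ t, ∫⁻ y, ENNReal.ofReal (breg (u (e (t, y)) ^ 2)
          (∫ y, u (e (t, y)) ^ 2 ∂(Measure.pi fun _ : Fin n => γ)))
          ∂(Measure.pi fun _ : Fin n => γ) ∂γ ≤
        ∫⁻ z, ENNReal.ofReal (2 * ∑ i : Fin n, fderiv ℝ u (e z) (Pi.single i.succ 1) ^ 2)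
          ∂(γ.prod (Measure.pi fun _ : Fin n => γ)) := by
      rw [lintegral_prod _ hB.aemeasurable]
      refine lintegral_mono_ae ?_
      filter_upwards [hint'.prod_right_ae] with t ht
      refine (ih _ (fun y => (hd1 t y).differentiableAt) ht).trans (le_of_eq ?_)
      simp_rw [fun y => (hd1 t y).fderiv, ContinuousLinearMap.comp_apply, hL]
    refine (add_le_add h1 h2).trans (le_of_eq ?_)
    rw [← lintegral_add_left hA]
    refine lintegral_congr fun z => ?_
    rw [← ENNReal.ofReal_add (by positivity)
      (mul_nonneg zero_le_two (Finset.sum_nonneg fun i _ => sq_nonneg _)), Fin.sum_univ_succ,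
      mul_add]

/-! ### The Gaussian measure of Euclidean space as a product -/

lemma pi_γ_eq (n : ℕ) : (Measure.pi fun _ : Fin n => γ) =
    (volume : Measure (Fin n → ℝ)).withDensity fun x => ENNReal.ofReal (∏ i, φ (x i)) := by
  have hφi : Integrable φ := integrable_gaussianPDFReal 0 1
  refine Measure.pi_eq fun s hs => ?_
  have hi : ∀ i, Integrable ((s i).indicator φ) := fun i => hφi.indicator (hs i)
  have hn : ∀ i x, 0 ≤ (s i).indicator φ x := fun i x =>
    indicator_nonneg (fun x _ => (φ_pos x).le) x
  rw [withDensity_apply _ (MeasurableSet.univ_pi hs),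
    ← lintegral_indicator (MeasurableSet.univ_pi hs)]
  have e1 : ∀ x : Fin n → ℝ, (univ.pi s).indicator
      (fun x => ENNReal.ofReal (∏ i, φ (x i))) x =
      ENNReal.ofReal (∏ i, (s i).indicator φ (x i)) := fun x => by
    by_cases hx : x ∈ univ.pi s
    · rw [indicator_of_mem hx]
      congr 1
      exact Finset.prod_congr rfl fun i _ => (indicator_of_mem (hx i (mem_univ i)) _).symm
    · rw [indicator_of_notMem hx]
      obtain ⟨i, hi⟩ : ∃ i, x i ∉ s i := by simpa [mem_univ_pi] using hx
      rw [Finset.prod_eq_zero (Finset.mem_univ i) (indicator_of_notMem hi _), ENNReal.ofReal_zero]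
  simp_rw [e1]
  have hI : Integrable (fun x : Fin n → ℝ => ∏ i, (s i).indicator φ (x i)) :=
    Integrable.fintype_prod hi
  rw [← ofReal_integral_eq_lintegral_ofReal hI
    (Eventually.of_forall fun x => Finset.prod_nonneg fun i _ => hn i _), volume_pi,
    integral_fintype_prod_eq_prod, ENNReal.ofReal_prod_of_nonneg
      (fun i _ => integral_nonneg (hn i))]
  refine Finset.prod_congr rfl fun i _ => ?_
  rw [ofReal_integral_eq_lintegral_ofReal (hi i) (Eventually.of_forall (hn i)), γ_eq,
    withDensity_apply _ (hs i), ← lintegral_indicator (hs i)]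
  refine lintegral_congr fun x => ?_
  by_cases hx : x ∈ s i <;> simp [hx]

lemma density_eq {n : ℕ} (x : Fin n → ℝ) :
    (2 * π) ^ (-(n : ℝ) / 2) * rexp (-‖WithLp.toLp 2 x‖ ^ 2 / 2) = ∏ i, φ (x i) := by
  have e : ∀ y : ℝ, φ y = (2 * π) ^ (-(1 : ℝ) / 2) * rexp (-y ^ 2 / 2) := fun y => by
    have : φ y = (√(2 * π))⁻¹ * rexp (-y ^ 2 / 2) := by simp [φ, gaussianPDFReal]
    rw [this, sqrt_eq_rpow, ← rpow_neg (by positivity)]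
    norm_num
  simp_rw [e]
  rw [Finset.prod_mul_distrib, ← exp_sum, EuclideanSpace.real_norm_sq_eq, Finset.prod_const,
    Finset.card_univ, Fintype.card_fin, ← rpow_natCast, ← rpow_mul (by positivity),
    ← Finset.sum_div, Finset.sum_neg_distrib]
  congr 2
  ring

/-- The Gaussian measure of Euclidean space, given by its density, is the product of the Gaussian
measures of the coordinate lines. -/
lemma measurePreserving_toLp (n : ℕ) :
    MeasurePreserving (MeasurableEquiv.toLp 2 (Fin n → ℝ)) (Measure.pi fun _ : Fin n => γ)
      ((volume : Measure (EuclideanSpace ℝ (Fin n))).withDensity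
        (fun x => ENNReal.ofReal ((2 * π) ^ (-(n : ℝ) / 2) * rexp (-‖x‖ ^ 2 / 2)))) := by
  have hp : MeasurePreserving (MeasurableEquiv.toLp 2 (Fin n → ℝ)) :=
    PiLp.volume_preserving_toLp (Fin n)
  refine ⟨MeasurableEquiv.measurable _, ?_⟩
  ext s hs
  rw [MeasurableEquiv.map_apply, pi_γ_eq, withDensity_apply _ hs,
    withDensity_apply _ (MeasurableEquiv.measurable _ hs),
    ← hp.setLIntegral_comp_preimage_emb (MeasurableEquiv.measurableEmbedding _)]
  refine lintegral_congr fun x => ?_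
  rw [← density_eq]
  rfl

end GaussianLSI

open GaussianLSI in
/-- Gross's Gaussian logarithmic Sobolev inequality: with
`dμ = (2π)^{-n/2} e^{-|x|²/2} dx` the standard Gaussian measure, if `∫ u² dμ = 1`
then `∫ u² ln u² dμ ≤ 2 ∫ |∇u|² dμ`. -/
theorem gaussian_LSI (n : ℕ) (hn : 0 < n)
    (μ : Measure (EuclideanSpace ℝ (Fin n)))
    (hμ : μ = (volume : Measure (EuclideanSpace ℝ (Fin n))).withDensity
      (fun x => ENNReal.ofReal ((2 * Real.pi) ^ (-(n : ℝ) / 2) * Real.exp (-‖x‖ ^ 2 / 2))))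
    (u : EuclideanSpace ℝ (Fin n) → ℝ)
    (hdiff : Differentiable ℝ u)
    (hgrad : Integrable (fun x => ‖fderiv ℝ u x‖ ^ 2) μ)
    (hent : Integrable (fun x => (u x) ^ 2 * Real.log ((u x) ^ 2)) μ)
    (hnorm : (∫ x, (u x) ^ 2 ∂μ) = 1) :
    (∫ x, (u x) ^ 2 * Real.log ((u x) ^ 2) ∂μ) ≤ 2 * ∫ x, ‖fderiv ℝ u x‖ ^ 2 ∂μ := by
  have mp : MeasurePreserving (MeasurableEquiv.toLp 2 (Fin n → ℝ))
      (Measure.pi fun _ : Fin n => γ) μ := hμ ▸ measurePreserving_toLp n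
  have hemb := (MeasurableEquiv.toLp 2 (Fin n → ℝ)).measurableEmbedding
  have hprob : IsProbabilityMeasure μ :=
    mp.map_eq ▸ Measure.isProbabilityMeasure_map mp.measurable.aemeasurable
  -- otherwise the integral in `hnorm` would be zero by convention
  have hu2 : Integrable (fun x => u x ^ 2) μ := by
    by_contra h
    rw [integral_undef h] at hnorm
    exact zero_ne_one hnorm
  let p : (Fin n → ℝ) ≃L[ℝ] EuclideanSpace ℝ (Fin n) :=
    (PiLp.continuousLinearEquiv 2 ℝ fun _ : Fin n => ℝ).symm
  have hw : ∀ x, HasFDerivAt (fun x => u (MeasurableEquiv.toLp 2 (Fin n → ℝ) x))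
      ((fderiv ℝ u (MeasurableEquiv.toLp 2 (Fin n → ℝ) x)).comp
        (p : (Fin n → ℝ) →L[ℝ] EuclideanSpace ℝ (Fin n))) x := fun x =>
    (hdiff (p x)).hasFDerivAt.comp x p.hasFDerivAt
  have hgr : ∀ x, ∑ i, ((fderiv ℝ u x).comp
      (p : (Fin n → ℝ) →L[ℝ] EuclideanSpace ℝ (Fin n))) (Pi.single i 1) ^ 2 =
      ‖fderiv ℝ u x‖ ^ 2 := fun x => by
    rw [(EuclideanSpace.basisFun (Fin n) ℝ).norm_dual]
    refine Finset.sum_congr rfl fun i _ => ?_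
    rw [EuclideanSpace.basisFun_apply]
    rfl
  have key := lsi_pi n (fun x => u (MeasurableEquiv.toLp 2 (Fin n → ℝ) x))
    (fun x => (hw x).differentiableAt) ((mp.integrable_comp_emb hemb).2 hu2)
  simp_rw [fun x => (hw x).fderiv, hgr] at key
  rw [mp.integral_comp hemb (fun x => u x ^ 2), hnorm,
    mp.lintegral_comp_emb hemb (fun x => ENNReal.ofReal (breg (u x ^ 2) 1)),
    mp.lintegral_comp_emb hemb (fun x => ENNReal.ofReal (2 * ‖fderiv ℝ u x‖ ^ 2))] at key
  have e : ∀ x, breg (u x ^ 2) 1 = u x ^ 2 * log (u x ^ 2) - u x ^ 2 + 1 := fun x => by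
    simp [breg]
  have hI : Integrable (fun x => breg (u x ^ 2) 1) μ := by
    simp_rw [e]; exact (hent.sub hu2).add (integrable_const 1)
  rw [← ofReal_integral_eq_lintegral_ofReal hI (Filter.Eventually.of_forall fun x =>
      breg_nonneg (sq_nonneg _) zero_le_one fun h => (one_ne_zero h).elim),
    ← ofReal_integral_eq_lintegral_ofReal (hgrad.const_mul 2)
      (Filter.Eventually.of_forall fun x => by positivity),
    ENNReal.ofReal_le_ofReal_iff
      (integral_nonneg fun x => by positivity), integral_const_mul] at key
  have e2 : ∫ x, breg (u x ^ 2) 1 ∂μ = ∫ x, u x ^ 2 * log (u x ^ 2) ∂μ := by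
    simp_rw [e]
    have hsub : Integrable (fun x => u x ^ 2 * log (u x ^ 2) - u x ^ 2) μ := hent.sub hu2
    rw [integral_add hsub (integrable_const 1), integral_sub hent hu2, hnorm]
    simp
  rwa [e2] at key
end

section
/- Let f ∈ W^{1,2}_{loc}(ℝⁿ) with ∫_{ℝⁿ} e^{-f} dx = (2π)^{n/2}. Then ∫_{ℝⁿ} ( (1/2)|∇f|² + f - n ) e^{-f} dx ≥ 0. -/
/-!
With `u = e^{-f/2}` the claim is the sharp Euclidean logarithmic Sobolev inequality. It is proved
for compactly supported `u` with a free scale `c > 0`: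
`∫ u² log u² ≤ m log m + 2c² ∫ |∇u|² - n (1 + log c + log(2π)/2) m`, where `m = ∫ u²`.

In dimension one (`lsi_one`) this is a mass transport argument. Let `T` carry `u² / m` to the
standard Gaussian, so that `T' e^{-T²/2} = κ u²` with `κ = √(2π) / m`. Then
`log u² = log T' - T²/2 - log κ`, and `log T' ≤ c T' - 1 - log c`; integrating `u² T'` by parts and
applying Young's inequality to `u u' T` gives the result. Taking `κ` slightly below the critical
value keeps `T` bounded, which removes the boundary terms, and `κ` is then sent to its limit.

The inequality tensorizes (`lsi_pi`): it is applied to slices in the first coordinate and in the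
remaining ones, and the two marginal entropies are recombined by the nonnegativity of mutual
information (`entropy_marginals_le`).

For general `f` the inequality is applied to `ψ_k e^{-f/2}` with cutoffs `ψ_k → 1`. The gradient
terms need not be integrable separately from `f e^{-f}`, so the cross term `ψ_k u ∇ψ_k · ∇u` cannot
be estimated on its own; taking `c < 1` leaves room to absorb it in
`c² |∇(ψ_k u)|² ≤ ψ_k² |∇u|² + c²/(1-c²) u² |∇ψ_k|²`. Finally `k → ∞` and then `c → 1`.
-/

open MeasureTheory Real

/-! ### The one-dimensional inequality by mass transport -/

/-- A function `p` with values strictly between `∓√(2π)/2`, the limits at `∓∞` of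
`Φ t = ∫ s in 0..t, e^{-s²/2}`, factors as `p = Φ ∘ T` with `T` differentiable. The equation
`T' = e^{T²/2} p'` is the change of variables formula for the transport to the Gaussian. -/
theorem exists_gaussian_transport (p p' : ℝ → ℝ) (hp : ∀ x, HasDerivAt p (p' x) x)
    (hb : ∀ x, |p x| < √(2 * π) / 2) :
    ∃ T : ℝ → ℝ, ∀ x, HasDerivAt T (exp (T x ^ 2 / 2) * p' x) x := by
  have hcont : Continuous fun s : ℝ => exp (-(1 / 2) * s ^ 2) := by fun_prop
  set Φ : ℝ → ℝ := fun t => ∫ s in (0 : ℝ)..t, exp (-(1 / 2) * s ^ 2) with hΦ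
  have hd : ∀ t, HasDerivAt Φ (exp (-(1 / 2) * t ^ 2)) t := fun t =>
    (hcont.integral_hasStrictDerivAt 0 t).hasDerivAt
  have hΦc : Continuous Φ := continuous_iff_continuousAt.2 fun t => (hd t).continuousAt
  have hmono : StrictMono Φ := strictMono_of_deriv_pos fun t => by
    rw [(hd t).deriv]; positivity
  have hodd : ∀ t, Φ (-t) = - Φ t := by
    intro t
    have := intervalIntegral.integral_comp_neg (a := 0) (b := t)
      (fun s : ℝ => exp (-(1 / 2) * s ^ 2))
    simp only [neg_sq, neg_zero] at this
    simp only [hΦ]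
    rw [this, intervalIntegral.integral_symm]
  have hlim : Filter.Tendsto Φ Filter.atTop (nhds (√(2 * π) / 2)) := by
    have h1 : Integrable fun s : ℝ => exp (-(1 / 2) * s ^ 2) :=
      integrable_exp_neg_mul_sq (by norm_num)
    have := intervalIntegral_tendsto_integral_Ioi (0 : ℝ) h1.integrableOn Filter.tendsto_id
    rw [integral_gaussian_Ioi, show π / (1 / 2) = 2 * π by ring] at this
    exact this
  have hsurj : ∀ x, ∃ t, Φ t = p x := by
    intro x
    obtain ⟨t, ht⟩ := (hlim.eventually (lt_mem_nhds (hb x))).exists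
    have h := abs_lt.1 ht
    exact mem_range_of_exists_le_of_exists_ge hΦc ⟨-t, by rw [hodd]; linarith⟩ ⟨t, h.2.le⟩
  choose T hT using hsurj
  have hemb : Topology.IsEmbedding Φ :=
    hmono.isEmbedding_of_ordConnected (isPreconnected_range hΦc).ordConnected
  have hrange : ∀ x, Set.range Φ ∈ nhds (Φ x) := fun x =>
    Filter.mem_of_superset (Icc_mem_nhds (hmono (sub_one_lt x)) (hmono (lt_add_one x)))
      ((isPreconnected_range hΦc).ordConnected.out ⟨_, rfl⟩ ⟨_, rfl⟩)
  -- The inverse function theorem for `Φ`, with continuity of the inverse read off from `Φ` being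
  -- an embedding.
  set g := Function.invFun Φ with hg
  have hgl : ∀ t, g (Φ t) = t := Function.leftInverse_invFun hmono.injective
  have hgr : ∀ t, ∀ᶠ y in nhds (Φ t), Φ (g y) = y := fun t => by
    filter_upwards [hrange t] with y hy
    exact Function.invFun_eq hy
  have hgd : ∀ t, HasDerivAt g (exp (-(1 / 2) * t ^ 2))⁻¹ (Φ t) := by
    intro t
    refine HasDerivAt.of_local_left_inverse ?_ (by rw [hgl]; exact hd t) (exp_pos _).ne' (hgr t)
    rw [hemb.isInducing.continuousAt_iff]
    exact continuousAt_id.congr ((hgr t).mono fun y hy => hy.symm)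
  have hTg : T = g ∘ p := by
    funext x
    simp [← hT, hgl]
  refine ⟨T, fun x => ?_⟩
  have := HasDerivAt.comp x (hT x ▸ hgd (T x)) (hp x)
  rw [← hTg] at this
  refine this.congr_deriv ?_
  rw [← exp_neg]
  ring_nf

/-- The constant per dimension at scale `c` in the logarithmic Sobolev inequality for Lebesgue
measure. -/
noncomputable def lsiConst (c : ℝ) : ℝ := 1 + log c + log (2 * π) / 2

/-- The transport inequality before integration, at a point where `u = v`, `u' = d`, `T = t`.
The factor of `c` is the derivative of `u² T`, since `T' = e^{T²/2} κ u²`. -/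
theorem lsi_pointwise {c κ v d t F : ℝ} (hc : 0 < c) (hκ : 0 < κ) (hF : F = v ^ 2) :
    F * log F ≤ c * (2 * v * d * t + F * (exp (t ^ 2 / 2) * (κ * F))) + 2 * c ^ 2 * d ^ 2
      - (1 + log c + log κ) * F := by
  have h0 : 0 ≤ F := hF ▸ sq_nonneg v
  have hyoung : 0 ≤ c * (2 * v * d * t) + 2 * c ^ 2 * d ^ 2 + F * t ^ 2 / 2 := by
    rw [hF]; nlinarith [sq_nonneg (v * t + 2 * c * d)]
  rcases h0.eq_or_lt with h | h
  · rw [← h] at hyoung ⊢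
    simp only [zero_mul, mul_zero, add_zero, zero_div, sub_zero] at hyoung ⊢
    exact hyoung
  -- `log (c T') ≤ c T' - 1`
  · have h1 := log_le_sub_one_of_pos (x := c * (exp (t ^ 2 / 2) * (κ * F))) (by positivity)
    rw [log_mul (by positivity) (by positivity), log_mul (by positivity) (by positivity),
      log_exp, log_mul (by positivity) (by positivity)] at h1
    nlinarith [mul_le_mul_of_nonneg_left h1 h.le]

theorem integrable_mul_log {X : Type*} [TopologicalSpace X] [MeasurableSpace X]
    [OpensMeasurableSpace X] (μ : Measure X) [IsFiniteMeasureOnCompacts μ] {F : X → ℝ}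
    (hF : Continuous F) (hc : HasCompactSupport F) : Integrable (fun x => F x * log (F x)) μ :=
  (Real.continuous_mul_log.comp hF).integrable_of_hasCompactSupport (hc.comp_left (by simp))

theorem hasCompactSupport_sq {X : Type*} [TopologicalSpace X] {u : X → ℝ}
    (hc : HasCompactSupport u) : HasCompactSupport fun x => u x ^ 2 :=
  hc.comp_left (g := fun t => t ^ 2) (by simp)

/-- The logarithmic Sobolev inequality on the line for compactly supported functions. -/
theorem lsi_one {c : ℝ} (hc : 0 < c) (u : ℝ → ℝ) (hu : Differentiable ℝ u)
    (hs : HasCompactSupport u) (hi : Integrable fun x => deriv u x ^ 2) :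
    ∫ x, u x ^ 2 * log (u x ^ 2) ≤ (∫ x, u x ^ 2) * log (∫ x, u x ^ 2)
      + 2 * c ^ 2 * (∫ x, deriv u x ^ 2) - lsiConst c * ∫ x, u x ^ 2 := by
  have huc := hu.continuous
  have hFc : Continuous fun x => u x ^ 2 := by fun_prop
  have hFs : HasCompactSupport fun x => u x ^ 2 := hasCompactSupport_sq hs
  have hFi : Integrable fun x => u x ^ 2 := hFc.integrable_of_hasCompactSupport hFs
  set m := ∫ x, u x ^ 2 with hm
  have hm0 : 0 ≤ m := integral_nonneg fun x => sq_nonneg _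
  have hD0 : 0 ≤ ∫ x, deriv u x ^ 2 := integral_nonneg fun x => sq_nonneg _
  rcases hm0.eq_or_lt with h | hmpos
  · have h0 : (fun x => u x ^ 2) = 0 :=
      (hFc.ae_eq_iff_eq volume continuous_zero).1
        ((integral_eq_zero_iff_of_nonneg (fun x => sq_nonneg _) hFi).1 (hm ▸ h.symm))
    have h0' : ∀ x, u x ^ 2 = 0 := fun x => congrFun h0 x
    simp only [← h, h0']
    simp
    positivity
  -- For `κ` below the critical value `√(2π) / m` the transport map is bounded.
  have key : ∀ κ, 0 < κ → κ * m < √(2 * π) →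
      ∫ x, u x ^ 2 * log (u x ^ 2) ≤ 2 * c ^ 2 * (∫ x, deriv u x ^ 2)
        - (1 + log c + log κ) * m := by
    intro κ hκ hκm
    -- The primitive of `κ u²`, centred so that its range is symmetric about `0`.
    obtain ⟨T, hT⟩ := exists_gaussian_transport
      (fun x => κ * ((∫ y in Set.Iic x, u y ^ 2) - m / 2)) (fun x => κ * u x ^ 2)
      (by
        intro x
        have h1 : (fun x => ∫ y in Set.Iic x, u y ^ 2)
            = fun x => (∫ y in (0 : ℝ)..x, u y ^ 2) + ∫ y in Set.Iic 0, u y ^ 2 := by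
          funext z
          rw [← intervalIntegral.integral_Iic_sub_Iic hFi.integrableOn hFi.integrableOn]
          ring
        have h2 : HasDerivAt (fun x => ∫ y in Set.Iic x, u y ^ 2) (u x ^ 2) x := by
          rw [h1]
          exact (hFc.integral_hasStrictDerivAt 0 x).hasDerivAt.add_const _
        exact (h2.sub_const _).const_mul κ)
      (by
        intro x
        have h1 : 0 ≤ ∫ y in Set.Iic x, u y ^ 2 := integral_nonneg fun x => sq_nonneg _
        have h2 : ∫ y in Set.Iic x, u y ^ 2 ≤ m :=
          setIntegral_le_integral hFi (Filter.Eventually.of_forall fun x => sq_nonneg _)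
        rw [abs_lt]
        constructor <;> nlinarith)
    have hTd : Differentiable ℝ T := fun x => (hT x).differentiableAt
    have hTc := hTd.continuous
    have hder : ∀ x, HasDerivAt (fun x => u x ^ 2 * T x)
        (2 * u x * deriv u x * T x + u x ^ 2 * (exp (T x ^ 2 / 2) * (κ * u x ^ 2))) x := by
      intro x
      have := ((hu x).hasDerivAt.pow 2).mul (hT x)
      refine this.congr_deriv ?_
      simp
    have hI1 : Integrable fun x => u x ^ 2 * T x :=
      (hFc.mul hTc).integrable_of_hasCompactSupport hFs.mul_right
    have hI2 : Integrable fun x => u x ^ 2 * (exp (T x ^ 2 / 2) * (κ * u x ^ 2)) := by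
      refine Continuous.integrable_of_hasCompactSupport (by fun_prop) ?_
      exact hFs.mul_right
    have hI4 : Integrable fun x => u x ^ 2 * T x ^ 2 := by
      refine Continuous.integrable_of_hasCompactSupport (by fun_prop) ?_
      exact hFs.mul_right
    have hI3 : Integrable fun x => 2 * u x * deriv u x * T x := by
      refine (hi.add hI4).mono' ?_ ?_
      · exact (((measurable_const.mul huc.measurable).mul (measurable_deriv u)).mul
          hTc.measurable).aestronglyMeasurable
      · refine Filter.Eventually.of_forall fun x => ?_
        simp only [Pi.add_apply, norm_eq_abs]
        rw [abs_le]
        constructor <;> nlinarith [sq_nonneg (deriv u x + u x * T x),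
          sq_nonneg (deriv u x - u x * T x)]
    have hI5 := hI3.add hI2
    have hz := integral_eq_zero_of_hasDerivAt_of_integrable hder hI5 hI1
    have hle := integral_mono (integrable_mul_log volume hFc hFs)
      (((hI5.const_mul c).add (hi.const_mul (2 * c ^ 2))).sub
        (hFi.const_mul (1 + log c + log κ)))
      (fun x => lsi_pointwise (d := deriv u x) (t := T x) hc hκ (F := u x ^ 2) rfl)
    refine hle.trans (le_of_eq ?_)
    rw [integral_sub' ((hI5.const_mul c).add (hi.const_mul (2 * c ^ 2)))
      (hFi.const_mul (1 + log c + log κ)), integral_add' (hI5.const_mul c)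
      (hi.const_mul (2 * c ^ 2)), integral_const_mul, integral_const_mul, integral_const_mul]
    have hz' : ∫ x, ((fun x => 2 * u x * deriv u x * T x) +
      fun x => u x ^ 2 * (exp (T x ^ 2 / 2) * (κ * u x ^ 2))) x = 0 := hz
    rw [hz', ← hm]
    ring
  have hcr : 0 < √(2 * π) / m := by positivity
  have hlim : Filter.Tendsto (fun κ => 2 * c ^ 2 * (∫ x, deriv u x ^ 2)
        - (1 + log c + log κ) * m) (nhdsWithin (√(2 * π) / m) (Set.Iio (√(2 * π) / m)))
      (nhds (2 * c ^ 2 * (∫ x, deriv u x ^ 2) - (1 + log c + log (√(2 * π) / m)) * m)) := by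
    refine Filter.Tendsto.mono_left ?_ nhdsWithin_le_nhds
    have := continuousAt_log hcr.ne'
    exact ContinuousAt.sub continuousAt_const
      ((continuousAt_const.add this).mul continuousAt_const)
  have hfin := ge_of_tendsto hlim (b := ∫ x, u x ^ 2 * log (u x ^ 2)) (by
    filter_upwards [self_mem_nhdsWithin, nhdsWithin_le_nhds (lt_mem_nhds hcr)] with κ h1 h2
    exact key κ h2 ((lt_div_iff₀ hmpos).1 h1))
  refine hfin.trans (le_of_eq ?_)
  rw [log_div (by positivity) hmpos.ne', log_sqrt (by positivity), lsiConst]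
  ring

/-! ### Subadditivity of entropy on a product -/

section Subadditivity

set_option linter.unusedSectionVars false

variable {X Y : Type*} [NormedAddCommGroup X] [MeasureSpace X] [BorelSpace X]
  [SecondCountableTopology X] [LocallyCompactSpace X] [SFinite (volume : Measure X)]
  [IsFiniteMeasureOnCompacts (volume : Measure X)]
  [NormedAddCommGroup Y] [MeasureSpace Y] [BorelSpace Y]
  [SecondCountableTopology Y] [LocallyCompactSpace Y] [SFinite (volume : Measure Y)]
  [IsFiniteMeasureOnCompacts (volume : Measure Y)]

theorem hasCompactSupport_slice {F : X × Y → ℝ} (hs : HasCompactSupport F) (x : X) :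
    HasCompactSupport fun y => F (x, y) := by
  refine HasCompactSupport.intro (hs.isCompact.image continuous_snd) fun y hy => ?_
  by_contra h
  exact hy ⟨(x, y), subset_tsupport _ h, rfl⟩

theorem hasCompactSupport_marginal {F : X × Y → ℝ} (hs : HasCompactSupport F) :
    HasCompactSupport fun x => ∫ y, F (x, y) := by
  refine HasCompactSupport.intro (hs.isCompact.image continuous_fst) fun x hx => ?_
  have : ∀ y, F (x, y) = 0 := by
    intro y
    by_contra h
    exact hx ⟨(x, y), subset_tsupport _ h, rfl⟩
  simp [this]

theorem continuous_marginal {F : X × Y → ℝ} (hF : Continuous F) (hs : HasCompactSupport F) :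
    Continuous fun x => ∫ y, F (x, y) := by
  have hK : IsCompact (Prod.snd '' tsupport F) := hs.isCompact.image continuous_snd
  have h := continuous_parametric_integral_of_continuous (μ := (volume : Measure Y))
    (f := fun x y => F (x, y)) hF hK
  refine h.congr fun x => setIntegral_eq_integral_of_forall_compl_eq_zero fun y hy => ?_
  by_contra h
  exact hy ⟨(x, y), subset_tsupport _ h, rfl⟩

/-- `log` of the marginal is unbounded, but integrating out `y` first turns `F log A` into
`A log A`, which is continuous with compact support. -/
theorem integrable_mul_log_marginal {F : X × Y → ℝ} (hF : Continuous F)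
    (hs : HasCompactSupport F) (h0 : ∀ z, 0 ≤ F z) :
    Integrable (fun z : X × Y => F z * log (∫ y, F (z.1, y))) (volume.prod volume) := by
  have hAc := continuous_marginal hF hs
  have hm : Measurable fun z : X × Y => F z * log (∫ y, F (z.1, y)) :=
    hF.measurable.mul ((hAc.measurable.comp measurable_fst).log)
  rw [integrable_prod_iff hm.aestronglyMeasurable]
  constructor
  · refine Filter.Eventually.of_forall fun x => ?_
    refine Integrable.mul_const (f := fun y => F (x, y)) ?_ (log (∫ y, F (x, y)))
    exact (hF.comp (by fun_prop)).integrable_of_hasCompactSupport (hasCompactSupport_slice hs x)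
  · have h1 : (fun x => ∫ y, ‖F (x, y) * log (∫ y, F (x, y))‖)
        = fun x => ‖(∫ y, F (x, y)) * log (∫ y, F (x, y))‖ := by
      funext x
      simp only [norm_mul]
      rw [integral_mul_const]
      congr 1
      rw [norm_of_nonneg (integral_nonneg fun y => h0 _)]
      exact integral_congr_ae (Filter.Eventually.of_forall fun y => norm_of_nonneg (h0 _))
    simp only at h1 ⊢
    rw [h1]
    exact (integrable_mul_log volume hAc (hasCompactSupport_marginal hs)).norm

theorem integral_mul_log_marginal {F : X × Y → ℝ} (hF : Continuous F)
    (hs : HasCompactSupport F) (h0 : ∀ z, 0 ≤ F z) :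
    ∫ z : X × Y, F z * log (∫ y, F (z.1, y)) ∂(volume.prod volume)
      = ∫ x, (∫ y, F (x, y)) * log (∫ y, F (x, y)) := by
  rw [integral_prod _ (integrable_mul_log_marginal hF hs h0)]
  simp only [integral_mul_const]

theorem eq_zero_of_marginal_eq_zero {F : X × Y → ℝ} (hF : Continuous F)
    [(volume : Measure Y).IsOpenPosMeasure]
    (hs : HasCompactSupport F) (h0 : ∀ z, 0 ≤ F z) {x : X} (h : ∫ y, F (x, y) = 0) (y : Y) :
    F (x, y) = 0 := by
  have hc : Continuous fun y => F (x, y) := hF.comp (by fun_prop)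
  have hi : Integrable fun y => F (x, y) :=
    hc.integrable_of_hasCompactSupport (hasCompactSupport_slice hs x)
  have h1 : (fun y => F (x, y)) = 0 := (hc.ae_eq_iff_eq volume continuous_zero).1
    ((integral_eq_zero_iff_of_nonneg (fun y => h0 _) hi).1 h)
  exact congrFun h1 y

/-- Integrand of the mutual information of a density `F` with marginals `A`, `B` and mass `m`,
bounded below by `log t ≤ t - 1` at `t = A B / (m F)`. -/
theorem mutual_information_pointwise {F A B m : ℝ} (hF : 0 ≤ F) (hA : 0 ≤ A) (hB : 0 ≤ B)
    (hm : 0 < m) (hA0 : A = 0 → F = 0) (hB0 : B = 0 → F = 0) :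
    F * log A + F * log B + (F - A * B / m) ≤ F * log F + F * log m := by
  rcases hF.eq_or_lt with h | h
  · rw [← h]
    simp only [zero_mul, zero_sub, zero_add, add_zero]
    linarith [show 0 ≤ A * B / m by positivity]
  · have hA' : 0 < A := hA.lt_of_ne fun h' => h.ne' (hA0 h'.symm)
    have hB' : 0 < B := hB.lt_of_ne fun h' => h.ne' (hB0 h'.symm)
    have h1 := log_le_sub_one_of_pos (x := A * B / m / F) (by positivity)
    rw [log_div (by positivity) h.ne', log_div (by positivity) hm.ne',
      log_mul hA'.ne' hB'.ne'] at h1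
    have h2 := mul_le_mul_of_nonneg_left h1 h.le
    have h3 : F * (A * B / m / F) = A * B / m := by field_simp
    nlinarith

/-- Nonnegativity of mutual information for a continuous compactly supported density. -/
theorem entropy_marginals_le [(volume : Measure X).IsOpenPosMeasure]
    [(volume : Measure Y).IsOpenPosMeasure] {F : X × Y → ℝ} (hF : Continuous F)
    (hs : HasCompactSupport F) (h0 : ∀ z, 0 ≤ F z) :
    (∫ x, (∫ y, F (x, y)) * log (∫ y, F (x, y))) + (∫ y, (∫ x, F (x, y)) * log (∫ x, F (x, y)))
      ≤ (∫ z, F z * log (F z) ∂(volume.prod volume))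
        + (∫ z, F z ∂(volume.prod volume)) * log (∫ z, F z ∂(volume.prod volume)) := by
  set G : Y × X → ℝ := fun w => F w.swap with hG
  have hGc : Continuous G := hF.comp continuous_swap
  have hGs : HasCompactSupport G := hs.comp_homeomorph (Homeomorph.prodComm Y X)
  have hG0 : ∀ w, 0 ≤ G w := fun w => h0 _
  have hFi : Integrable F (volume.prod volume) := hF.integrable_of_hasCompactSupport hs
  have hB1 : Integrable (fun z : X × Y => F z * log (∫ x, F (x, z.2))) (volume.prod volume) :=
    (integrable_mul_log_marginal hGc hGs hG0).swap
  have hB2 : ∫ z : X × Y, F z * log (∫ x, F (x, z.2)) ∂(volume.prod volume)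
      = ∫ y, (∫ x, F (x, y)) * log (∫ x, F (x, y)) := by
    refine Eq.trans ?_ (integral_mul_log_marginal hGc hGs hG0)
    exact integral_prod_swap (fun w : Y × X => G w * log (∫ x, F (x, w.1)))
  have hA1 := integrable_mul_log_marginal hF hs h0
  have hAi : Integrable fun x => ∫ y, F (x, y) :=
    (continuous_marginal hF hs).integrable_of_hasCompactSupport (hasCompactSupport_marginal hs)
  have hBi : Integrable fun y => ∫ x, F (x, y) :=
    (continuous_marginal hGc hGs).integrable_of_hasCompactSupport (hasCompactSupport_marginal hGs)
  set m := ∫ z, F z ∂(volume.prod volume) with hm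
  have hm0 : 0 ≤ m := integral_nonneg h0
  have hmA : ∫ x, ∫ y, F (x, y) = m := (integral_prod _ hFi).symm
  have hmB : ∫ y, ∫ x, F (x, y) = m := (integral_prod_symm _ hFi).symm
  rcases hm0.eq_or_lt with h | hmpos
  · have h1 : F = 0 := (hF.ae_eq_iff_eq (volume.prod volume) continuous_zero).1
      ((integral_eq_zero_iff_of_nonneg h0 hFi).1 (hm ▸ h.symm))
    rw [← h, h1]
    simp
  have hI := (hA1.add hB1).add (hFi.sub ((hAi.mul_prod hBi).div_const m))
  have hle := integral_mono hI ((integrable_mul_log (volume.prod volume) hF hs).add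
    (hFi.mul_const (log m))) (fun z => by
      exact mutual_information_pointwise (h0 z) (integral_nonneg fun y => h0 (z.1, y))
        (integral_nonneg fun x => h0 (x, z.2)) hmpos
        (fun h => eq_zero_of_marginal_eq_zero hF hs h0 h z.2)
        (fun h => eq_zero_of_marginal_eq_zero hGc hGs hG0 h z.1))
  rw [integral_add' (hA1.add hB1) (hFi.sub ((hAi.mul_prod hBi).div_const m)),
    integral_add' hA1 hB1, integral_sub' hFi ((hAi.mul_prod hBi).div_const m),
    integral_add' (integrable_mul_log (volume.prod volume) hF hs) (hFi.mul_const (log m)),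
    integral_div, integral_prod_mul (fun x => ∫ y, F (x, y)) (fun y => ∫ x, F (x, y)), hmA, hmB,
    integral_mul_const, ← hm, hB2, integral_mul_log_marginal hF hs h0] at hle
  have h3 : m * m / m = m := by field_simp
  linarith

end Subadditivity

theorem integral_le_linear_combination {X : Type*} [MeasurableSpace X] {μ : Measure X}
    {e a d w : X → ℝ} (he : Integrable e μ) (ha : Integrable a μ) (hd : Integrable d μ)
    (hw : Integrable w μ) {p q : ℝ} (h : ∀ᵐ x ∂μ, e x ≤ a x + p * d x - q * w x) :
    ∫ x, e x ∂μ ≤ (∫ x, a x ∂μ) + p * (∫ x, d x ∂μ) - q * ∫ x, w x ∂μ := by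
  have h1 : Integrable (fun x => a x + p * d x) μ := ha.add (hd.const_mul p)
  rw [← integral_const_mul, ← integral_const_mul, ← integral_add ha (hd.const_mul p),
    ← integral_sub h1 (hw.const_mul q)]
  exact integral_mono_ae he (h1.sub (hw.const_mul q)) h

/-! ### Tensorization -/

/-- The squared Euclidean length of the gradient of `u`, through its partial derivatives, as
`Fin n → ℝ` carries the sup norm. -/
noncomputable def gradSq {n : ℕ} (u : (Fin n → ℝ) → ℝ) (x : Fin n → ℝ) : ℝ :=
  ∑ i, (fderiv ℝ u x (Pi.single i 1)) ^ 2

theorem measurable_gradSq {n : ℕ} (u : (Fin n → ℝ) → ℝ) : Measurable (gradSq u) :=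
  Finset.measurable_sum _ fun i _ => (measurable_fderiv_apply_const ℝ u (Pi.single i 1)).pow_const 2

/-- The logarithmic Sobolev inequality in dimension `n`, by induction on `n`: the coordinates of
`ℝⁿ⁺¹` are split as `ℝ × ℝⁿ`, where `D₀` and `D₁` below are the two parts of the squared
gradient. -/
theorem lsi_pi {c : ℝ} (hc : 0 < c) (n : ℕ) : ∀ u : (Fin n → ℝ) → ℝ, Differentiable ℝ u →
    HasCompactSupport u → Integrable (gradSq u) →
    ∫ x, u x ^ 2 * log (u x ^ 2) ≤ (∫ x, u x ^ 2) * log (∫ x, u x ^ 2)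
      + 2 * c ^ 2 * (∫ x, gradSq u x) - n * lsiConst c * ∫ x, u x ^ 2 := by
  induction n with
  | zero =>
    intro u _ _ _
    have h : (volume : Measure (Fin 0 → ℝ)) = Measure.dirac 0 := by
      rw [volume_pi, Measure.pi_of_empty _ 0]
    simp [h, gradSq]
  | succ n ih =>
    intro u hu hs hi
    set L := Fin.consEquivL ℝ (fun _ : Fin (n + 1) => ℝ) with hL
    set e := (MeasurableEquiv.piFinSuccAbove (fun _ : Fin (n + 1) => ℝ) 0).symm with he
    have hmp : MeasurePreserving e (volume.prod volume) volume :=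
      (volume_preserving_piFinSuccAbove (fun _ : Fin (n + 1) => ℝ) 0).symm
    have heL : ∀ z, e z = L z := fun z => by
      ext i
      refine Fin.cases ?_ (fun j => ?_) i <;> rfl
    have hint : ∀ g : (Fin (n + 1) → ℝ) → ℝ,
        ∫ x, g x = ∫ z, g (L z) ∂(volume.prod volume) := fun g => by
      rw [← hmp.integral_comp' g]
      simp only [heL]
    set v : ℝ × (Fin n → ℝ) → ℝ := fun z => u (L z) with hv
    have hvc : Continuous v := hu.continuous.comp L.continuous
    have hvs : HasCompactSupport v :=
      hs.comp_isClosedEmbedding L.toHomeomorph.isClosedEmbedding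
    set D₀ : ℝ × (Fin n → ℝ) → ℝ := fun z => (fderiv ℝ u (L z) (Pi.single 0 1)) ^ 2 with hD₀
    set D₁ : ℝ × (Fin n → ℝ) → ℝ :=
      fun z => ∑ i : Fin n, (fderiv ℝ u (L z) (Pi.single i.succ 1)) ^ 2 with hD₁
    have hL0 : L (1, 0) = Pi.single 0 1 := by
      ext i
      refine Fin.cases ?_ (fun j => ?_) i
      · rfl
      · rw [Pi.single_eq_of_ne (Fin.succ_ne_zero j)]; rfl
    have hL1 : ∀ i : Fin n, L (0, Pi.single i 1) = Pi.single i.succ 1 := by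
      intro k
      ext i
      refine Fin.cases ?_ (fun j => ?_) i
      · rw [Pi.single_eq_of_ne (Fin.succ_ne_zero k).symm]; rfl
      · simp only [Pi.single_apply, Fin.succ_inj]
        show (Pi.single k (1 : ℝ) : Fin n → ℝ) j = _
        rw [Pi.single_apply]
    have hvd : ∀ z, HasFDerivAt v ((fderiv ℝ u (L z)).comp (L : _ →L[ℝ] _)) z := fun z =>
      (hu (L z)).hasFDerivAt.comp z L.hasFDerivAt
    have hd0 : ∀ x y, HasDerivAt (fun s => v (s, y)) (fderiv ℝ u (L (x, y)) (Pi.single 0 1)) x := by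
      intro x y
      have h1 : HasDerivAt (fun s : ℝ => (s, y)) (1, 0) x :=
        (hasDerivAt_id x).prodMk (hasDerivAt_const x y)
      have := (hvd (x, y)).comp_hasDerivAt x h1
      exact HasDerivAt.congr_deriv (f := fun s => v (s, y)) this (by simp [hL0])
    have hd1 : ∀ x y, HasFDerivAt (fun s => v (x, s)) (((fderiv ℝ u (L (x, y))).comp
        (L : _ →L[ℝ] _)).comp (ContinuousLinearMap.inr ℝ ℝ (Fin n → ℝ))) y := fun x y =>
      (hvd (x, y)).comp y (hasFDerivAt_prodMk_right x y)
    have hD0 : ∀ x y, D₀ (x, y) = deriv (fun s => v (s, y)) x ^ 2 := fun x y => by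
      rw [(hd0 x y).deriv]
    have hD1 : ∀ x y, D₁ (x, y) = gradSq (fun s => v (x, s)) y := fun x y => by
      simp only [gradSq, (hd1 x y).fderiv, hD₁]
      simp [hL1]
    have hG : ∀ z, gradSq u (L z) = D₀ z + D₁ z := fun z => by
      simp only [gradSq, Fin.sum_univ_succ, hD₀, hD₁]
    have hD0n : ∀ z, 0 ≤ D₀ z := fun z => sq_nonneg _
    have hD1n : ∀ z, 0 ≤ D₁ z := fun z => Finset.sum_nonneg fun _ _ => sq_nonneg _
    have hLm : Measurable L := L.continuous.measurable
    have hD0m : Measurable D₀ :=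
      ((measurable_fderiv_apply_const ℝ u _).comp hLm).pow_const 2
    have hD1m : Measurable D₁ := Finset.measurable_sum _ fun i _ =>
      ((measurable_fderiv_apply_const ℝ u _).comp hLm).pow_const 2
    have hGi : Integrable (fun z => gradSq u (L z)) (volume.prod volume) := by
      have := (hmp.integrable_comp_emb e.measurableEmbedding).2 hi
      exact this.congr (Filter.Eventually.of_forall fun z => by simp [heL])
    have hD0i : Integrable D₀ (volume.prod volume) :=
      hGi.mono' hD0m.aestronglyMeasurable (Filter.Eventually.of_forall fun z => by
        rw [norm_of_nonneg (hD0n z), hG]; linarith [hD1n z])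
    have hD1i : Integrable D₁ (volume.prod volume) :=
      hGi.mono' hD1m.aestronglyMeasurable (Filter.Eventually.of_forall fun z => by
        rw [norm_of_nonneg (hD1n z), hG]; linarith [hD0n z])
    rw [hint, hint (fun x => u x ^ 2), hint (gradSq u)]
    have hFc : Continuous fun z => v z ^ 2 := by fun_prop
    have hFs : HasCompactSupport fun z => v z ^ 2 := hasCompactSupport_sq hvs
    have hFi : Integrable (fun z => v z ^ 2) (volume.prod volume) :=
      hFc.integrable_of_hasCompactSupport hFs
    have hEi := integrable_mul_log (volume.prod volume) hFc hFs
    have hvswap : HasCompactSupport fun w : (Fin n → ℝ) × ℝ => v (w.2, w.1) :=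
      hvs.comp_homeomorph (Homeomorph.prodComm (Fin n → ℝ) ℝ)
    have hswap : HasCompactSupport fun w : (Fin n → ℝ) × ℝ => v (w.2, w.1) ^ 2 :=
      hasCompactSupport_sq hvswap
    have hcswap : Continuous fun w : (Fin n → ℝ) × ℝ => v (w.2, w.1) ^ 2 := by fun_prop
    have hAc : Continuous fun x => ∫ y, v (x, y) ^ 2 := continuous_marginal hFc hFs
    have hAs : HasCompactSupport fun x => ∫ y, v (x, y) ^ 2 := hasCompactSupport_marginal hFs
    have hBc : Continuous fun y => ∫ x, v (x, y) ^ 2 :=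
      continuous_marginal (F := fun w : (Fin n → ℝ) × ℝ => v (w.2, w.1) ^ 2) hcswap hswap
    have hBs : HasCompactSupport fun y => ∫ x, v (x, y) ^ 2 :=
      hasCompactSupport_marginal (F := fun w : (Fin n → ℝ) × ℝ => v (w.2, w.1) ^ 2) hswap
    have hAi : Integrable fun x => (∫ y, v (x, y) ^ 2) * log (∫ y, v (x, y) ^ 2) :=
      integrable_mul_log volume hAc hAs
    have hBi : Integrable fun y => (∫ x, v (x, y) ^ 2) * log (∫ x, v (x, y) ^ 2) :=
      integrable_mul_log volume hBc hBs
    -- Adding `h1` and `h2`, the inequalities on the slices, to `h3` cancels both marginal entropies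
    -- and one copy of the joint entropy.
    have h3 := entropy_marginals_le hFc hFs (fun z => sq_nonneg _)
    have h1 : ∫ z, v z ^ 2 * log (v z ^ 2) ∂(volume.prod volume)
        ≤ (∫ x, (∫ y, v (x, y) ^ 2) * log (∫ y, v (x, y) ^ 2))
          + 2 * c ^ 2 * (∫ z, D₁ z ∂(volume.prod volume))
          - n * lsiConst c * ∫ z, v z ^ 2 ∂(volume.prod volume) := by
      rw [integral_prod _ hEi, integral_prod _ hD1i, integral_prod _ hFi]
      refine integral_le_linear_combination hEi.integral_prod_left hAi hD1i.integral_prod_left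
        hFi.integral_prod_left ?_
      filter_upwards [hD1i.prod_right_ae] with x hx
      simp only [hD1] at hx ⊢
      exact ih (fun y => v (x, y)) (fun y => (hd1 x y).differentiableAt)
        (hasCompactSupport_slice hvs x) hx
    have h2 : ∫ z, v z ^ 2 * log (v z ^ 2) ∂(volume.prod volume)
        ≤ (∫ y, (∫ x, v (x, y) ^ 2) * log (∫ x, v (x, y) ^ 2))
          + 2 * c ^ 2 * (∫ z, D₀ z ∂(volume.prod volume))
          - lsiConst c * ∫ z, v z ^ 2 ∂(volume.prod volume) := by
      rw [integral_prod_symm _ hEi, integral_prod_symm _ hD0i, integral_prod_symm _ hFi]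
      refine integral_le_linear_combination hEi.integral_prod_right hBi hD0i.integral_prod_right
        hFi.integral_prod_right ?_
      filter_upwards [hD0i.prod_left_ae] with y hy
      simp only [hD0] at hy ⊢
      exact lsi_one hc (fun x => v (x, y)) (fun x => (hd0 x y).differentiableAt)
        (hasCompactSupport_slice hvswap y) hy
    simp only [hG]
    rw [integral_add hD0i hD1i]
    push_cast
    show ∫ z, v z ^ 2 * log (v z ^ 2) ∂(volume.prod volume) ≤ (∫ z, v z ^ 2 ∂(volume.prod volume))
      * log (∫ z, v z ^ 2 ∂(volume.prod volume)) + _ - _ * (∫ z, v z ^ 2 ∂(volume.prod volume))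
    linarith

/-- The logarithmic Sobolev inequality transferred to `EuclideanSpace ℝ (Fin n)`. -/
theorem lsi_euclidean {c : ℝ} (hc : 0 < c) (n : ℕ) (u : EuclideanSpace ℝ (Fin n) → ℝ)
    (hu : Differentiable ℝ u) (hs : HasCompactSupport u)
    (hi : Integrable fun x => ‖fderiv ℝ u x‖ ^ 2) :
    ∫ x, u x ^ 2 * log (u x ^ 2) ≤ (∫ x, u x ^ 2) * log (∫ x, u x ^ 2)
      + 2 * c ^ 2 * (∫ x, ‖fderiv ℝ u x‖ ^ 2) - n * lsiConst c * ∫ x, u x ^ 2 := by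
  set L := (PiLp.continuousLinearEquiv 2 ℝ (fun _ : Fin n => ℝ)).symm with hL
  set e := MeasurableEquiv.toLp 2 (Fin n → ℝ) with he
  have hmp : MeasurePreserving e := PiLp.volume_preserving_toLp (Fin n)
  have heL : ∀ z, e z = L z := fun z => rfl
  have hint : ∀ g : EuclideanSpace ℝ (Fin n) → ℝ, ∫ x, g x = ∫ z, g (L z) := fun g => by
    rw [← hmp.integral_comp' g]
    simp only [heL]
  have hvd : ∀ z, HasFDerivAt (fun z => u (L z)) ((fderiv ℝ u (L z)).comp (L : _ →L[ℝ] _)) z :=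
    fun z => (hu (L z)).hasFDerivAt.comp z L.hasFDerivAt
  have hG : ∀ z, gradSq (fun z => u (L z)) z = ‖fderiv ℝ u (L z)‖ ^ 2 := fun z => by
    rw [(EuclideanSpace.basisFun (Fin n) ℝ).norm_dual]
    simp only [gradSq, (hvd z).fderiv]
    refine Finset.sum_congr rfl fun i _ => ?_
    simp only [EuclideanSpace.basisFun_apply]
    rfl
  have hGi : Integrable (gradSq fun z => u (L z)) := by
    have := (hmp.integrable_comp_emb e.measurableEmbedding).2 hi
    exact this.congr (Filter.Eventually.of_forall fun z => by simp [heL, hG])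
  have := lsi_pi hc n (fun z => u (L z)) (fun z => (hvd z).differentiableAt)
    (hs.comp_isClosedEmbedding L.toHomeomorph.isClosedEmbedding) hGi
  rw [hint, hint (fun x => u x ^ 2), hint (fun x => ‖fderiv ℝ u x‖ ^ 2)]
  simpa only [hG] using this

/-! ### Removing the cutoff -/

/-- Cutoff functions with gradient of order `1/k`: dilations of a fixed smooth bump. -/
theorem exists_cutoff (E : Type*) [NormedAddCommGroup E] [InnerProductSpace ℝ E]
    [FiniteDimensional ℝ E] : ∃ (ψ : ℕ → E → ℝ) (K : ℝ), (∀ k, Differentiable ℝ (ψ k)) ∧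
      (∀ k, HasCompactSupport (ψ k)) ∧ (∀ k x, 0 ≤ ψ k x) ∧ (∀ k x, ψ k x ≤ 1) ∧
      (∀ x, Filter.Tendsto (fun k => ψ k x) Filter.atTop (nhds 1)) ∧
      ∀ k x, ‖fderiv ℝ (ψ k) x‖ ≤ K * (1 / ((k : ℝ) + 1)) := by
  let χ : ContDiffBump (0 : E) := ⟨1, 2, by norm_num, by norm_num⟩
  have hχ : ContDiff ℝ 1 χ := χ.contDiff
  have hχd : Differentiable ℝ χ := hχ.differentiable (by norm_num)
  obtain ⟨K, hK⟩ := (χ.hasCompactSupport.fderiv (𝕜 := ℝ)).exists_bound_of_continuous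
    (hχ.continuous_fderiv (by norm_num))
  have hpos : ∀ k : ℕ, (0 : ℝ) < 1 / ((k : ℝ) + 1) := fun k => Nat.one_div_pos_of_nat
  have hder : ∀ (k : ℕ) x, HasFDerivAt (fun x => χ ((1 / ((k : ℝ) + 1)) • x))
      ((fderiv ℝ χ ((1 / ((k : ℝ) + 1)) • x)).comp
        ((1 / ((k : ℝ) + 1)) • ContinuousLinearMap.id ℝ E)) x := fun k x =>
    (hχd _).hasFDerivAt.comp x ((hasFDerivAt_id x).const_smul (1 / ((k : ℝ) + 1)))
  refine ⟨fun k x => χ ((1 / ((k : ℝ) + 1)) • x), K, fun k x => (hder k x).differentiableAt,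
    fun k => ?_, fun k x => χ.nonneg, fun k x => χ.le_one, fun x => ?_, fun k x => ?_⟩
  · exact χ.hasCompactSupport.comp_smul (hpos k).ne'
  · have h1 : Filter.Tendsto (fun k : ℕ => χ ((1 / ((k : ℝ) + 1)) • x)) Filter.atTop
        (nhds (χ ((0 : ℝ) • x))) :=
      (hχd.continuous.tendsto _).comp
        ((tendsto_one_div_add_atTop_nhds_zero_nat (𝕜 := ℝ)).smul_const x)
    rwa [zero_smul, χ.one_of_mem_closedBall (by simp [χ])] at h1
  · rw [(hder k x).fderiv]
    simp only [ContinuousLinearMap.comp_smul, ContinuousLinearMap.comp_id, norm_smul]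
    rw [norm_of_nonneg (hpos k).le, mul_comm]
    exact mul_le_mul_of_nonneg_right (hK _) (hpos k).le

theorem abs_mul_log_le_one {t : ℝ} (h0 : 0 ≤ t) (h1 : t ≤ 1) : |t * log t| ≤ 1 := by
  rcases h0.eq_or_lt with h | h
  · simp [← h]
  · rw [mul_comm]; exact (abs_log_mul_self_lt t h h1).le

/-- Young's inequality with the weight for which the coefficient of `a²` is not increased when
the square of the sum is multiplied by `c² < 1`. -/
theorem cutoff_gradient_bound {c a b d : ℝ} (hc : 0 < c) (hc1 : c < 1)
    (hd : 0 ≤ d) (hdab : d ≤ a + b) :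
    2 * c ^ 2 * d ^ 2 ≤ 2 * a ^ 2 + 2 * (c ^ 2 / (1 - c ^ 2)) * b ^ 2 := by
  have h1 : 0 < 1 - c ^ 2 := by nlinarith
  have h2 : d ^ 2 ≤ (a + b) ^ 2 := by gcongr
  have h3 : a ^ 2 + c ^ 2 / (1 - c ^ 2) * b ^ 2 - c ^ 2 * (a + b) ^ 2
      = ((1 - c ^ 2) * a - c ^ 2 * b) ^ 2 / (1 - c ^ 2) := by
    field_simp
    ring
  have h4 : 0 ≤ ((1 - c ^ 2) * a - c ^ 2 * b) ^ 2 / (1 - c ^ 2) := by positivity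
  nlinarith [mul_le_mul_of_nonneg_left h2 (sq_nonneg c)]

/-- The limit of `lsi_euclidean` along the functions `ψ_k e^{-f/2}`, in which the loss of a factor
`c < 1` pays for the gradient of the cutoff. The squared gradient and `f` are only assumed
integrable in combination. -/
theorem entropy_LSI_scale {c : ℝ} (hc : 0 < c) (hc1 : c < 1) (n : ℕ)
    (f : EuclideanSpace ℝ (Fin n) → ℝ) (hdiff : Differentiable ℝ f)
    (hg : Integrable fun x => exp (-f x))
    (hH : Integrable fun x => (1 / 2 * ‖fderiv ℝ f x‖ ^ 2 + f x) * exp (-f x)) :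
    0 ≤ (∫ x, (1 / 2 * ‖fderiv ℝ f x‖ ^ 2 + f x) * exp (-f x))
      + (∫ x, exp (-f x)) * log (∫ x, exp (-f x)) - n * lsiConst c * ∫ x, exp (-f x) := by
  obtain ⟨ψ, K, hψd, hψs, hψ0, hψ1, hψt, hψK⟩ := exists_cutoff (EuclideanSpace ℝ (Fin n))
  have hfc := hdiff.continuous
  have hψc : ∀ k, Continuous (ψ k) := fun k => (hψd k).continuous
  have hψsq : ∀ k x, ψ k x ^ 2 ≤ 1 := fun k x => pow_le_one₀ (hψ0 k x) (hψ1 k x)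
  have hexp : ∀ x, exp (-f x / 2) ^ 2 = exp (-f x) := fun x => by
    rw [← exp_nat_mul]; congr 1; push_cast; ring
  set C : ℕ → ℝ := fun k => 2 * (c ^ 2 / (1 - c ^ 2)) * (K * (1 / ((k : ℝ) + 1))) ^ 2 with hC
  have hwd : ∀ k x, HasFDerivAt (fun x => ψ k x * exp (-f x / 2))
      (ψ k x • (exp (-f x / 2) • ((-1 / 2 : ℝ) • fderiv ℝ f x))
        + exp (-f x / 2) • fderiv ℝ (ψ k) x) x := by
    intro k x
    have h1 : HasFDerivAt (fun x => -f x / 2) ((-1 / 2 : ℝ) • fderiv ℝ f x) x := by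
      have := (hdiff x).hasFDerivAt.const_mul (-1 / 2 : ℝ)
      refine this.congr_of_eventuallyEq (Filter.Eventually.of_forall fun y => ?_)
      ring
    exact (hψd k x).hasFDerivAt.mul h1.exp
  have hwn : ∀ k x, ‖fderiv ℝ (fun x => ψ k x * exp (-f x / 2)) x‖
      ≤ ψ k x * exp (-f x / 2) * (1 / 2 * ‖fderiv ℝ f x‖)
        + exp (-f x / 2) * (K * (1 / ((k : ℝ) + 1))) := by
    intro k x
    rw [(hwd k x).fderiv]
    refine (norm_add_le _ _).trans ?_
    simp only [norm_smul, norm_of_nonneg (hψ0 k x), norm_of_nonneg (exp_pos (-f x / 2)).le]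
    have h1 : ‖(-1 / 2 : ℝ)‖ = 1 / 2 := by norm_num [abs_of_pos, abs_of_neg]
    rw [h1]
    have := mul_le_mul_of_nonneg_left (hψK k x) (exp_pos (-f x / 2)).le
    linarith
  have hgrad : ∀ k x, 2 * c ^ 2 * ‖fderiv ℝ (fun x => ψ k x * exp (-f x / 2)) x‖ ^ 2
      ≤ ψ k x ^ 2 * (1 / 2 * ‖fderiv ℝ f x‖ ^ 2 * exp (-f x)) + C k * exp (-f x) := by
    intro k x
    refine (cutoff_gradient_bound hc hc1 (norm_nonneg _) (hwn k x)).trans (le_of_eq ?_)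
    simp only [hC]
    rw [← hexp x]
    ring
  have hlog : ∀ k x, (ψ k x * exp (-f x / 2)) ^ 2 * log ((ψ k x * exp (-f x / 2)) ^ 2)
      = ψ k x ^ 2 * log (ψ k x ^ 2) * exp (-f x) - ψ k x ^ 2 * (f x * exp (-f x)) := by
    intro k x
    rw [mul_pow, hexp]
    by_cases h : ψ k x = 0
    · simp [h]
    · rw [log_mul (by positivity) (exp_pos _).ne', log_exp]
      ring
  have hψsqs : ∀ k, HasCompactSupport fun x => ψ k x ^ 2 := fun k => hasCompactSupport_sq (hψs k)
  have hHψ : ∀ k, Integrable fun x =>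
      ψ k x ^ 2 * ((1 / 2 * ‖fderiv ℝ f x‖ ^ 2 + f x) * exp (-f x)) := fun k =>
    hH.bdd_mul (c := 1) ((hψc k).pow 2).aestronglyMeasurable
      (Filter.Eventually.of_forall fun x => by
        rw [norm_of_nonneg (sq_nonneg _)]; exact hψsq k x)
  -- On the support of the cutoff `f e^{-f}` is bounded, so there the squared gradient is
  -- integrable separately.
  have hfψ : ∀ k, Integrable fun x => ψ k x ^ 2 * (f x * exp (-f x)) := fun k =>
    Continuous.integrable_of_hasCompactSupport
      (((hψc k).pow 2).mul (hfc.mul (by fun_prop))) (hψsqs k).mul_right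
  have hdψ : ∀ k, Integrable fun x => ψ k x ^ 2 * (1 / 2 * ‖fderiv ℝ f x‖ ^ 2 * exp (-f x)) :=
    fun k => ((hHψ k).sub (hfψ k)).congr (Filter.Eventually.of_forall fun x => by
      simp only [Pi.sub_apply]; ring)
  have hwi : ∀ k, Integrable fun x => ‖fderiv ℝ (fun x => ψ k x * exp (-f x / 2)) x‖ ^ 2 := by
    intro k
    have h1 : Integrable fun x =>
        2 * c ^ 2 * ‖fderiv ℝ (fun x => ψ k x * exp (-f x / 2)) x‖ ^ 2 := by
      refine ((hdψ k).add (hg.const_mul (C k))).mono'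
        (((measurable_fderiv ℝ _).norm.pow_const 2).const_mul _).aestronglyMeasurable
        (Filter.Eventually.of_forall fun x => ?_)
      rw [norm_of_nonneg (by positivity)]
      exact hgrad k x
    refine (h1.const_mul (2 * c ^ 2)⁻¹).congr (Filter.Eventually.of_forall fun x => ?_)
    simp only
    field_simp
  have hws : ∀ k, HasCompactSupport fun x => ψ k x * exp (-f x / 2) := fun k => (hψs k).mul_right
  have hwc : ∀ k, Continuous fun x => ψ k x * exp (-f x / 2) := fun k =>
    (hψc k).mul (by fun_prop)
  have hli : ∀ k, Integrable fun x => ψ k x ^ 2 * log (ψ k x ^ 2) * exp (-f x) := fun k =>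
    hg.bdd_mul (c := 1) (Real.continuous_mul_log.comp ((hψc k).pow 2)).aestronglyMeasurable
      (Filter.Eventually.of_forall fun x => abs_mul_log_le_one (sq_nonneg _) (hψsq k x))
  have hmain : ∀ k, 0 ≤ (∫ x, ψ k x ^ 2 * ((1 / 2 * ‖fderiv ℝ f x‖ ^ 2 + f x) * exp (-f x)))
      + C k * (∫ x, exp (-f x)) - (∫ x, ψ k x ^ 2 * log (ψ k x ^ 2) * exp (-f x))
      + (∫ x, ψ k x ^ 2 * exp (-f x)) * log (∫ x, ψ k x ^ 2 * exp (-f x))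
      - n * lsiConst c * ∫ x, ψ k x ^ 2 * exp (-f x) := by
    intro k
    have h1 := lsi_euclidean hc n (fun x => ψ k x * exp (-f x / 2))
      (fun x => (hwd k x).differentiableAt) (hws k) (hwi k)
    simp only [hlog k] at h1
    simp only [mul_pow, hexp] at h1
    rw [integral_sub (hli k) (hfψ k)] at h1
    have h2 : 2 * c ^ 2 * (∫ x, ‖fderiv ℝ (fun x => ψ k x * exp (-f x / 2)) x‖ ^ 2)
        ≤ (∫ x, ψ k x ^ 2 * (1 / 2 * ‖fderiv ℝ f x‖ ^ 2 * exp (-f x)))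
          + C k * ∫ x, exp (-f x) := by
      rw [← integral_const_mul, ← integral_const_mul,
        ← integral_add (hdψ k) (hg.const_mul (C k))]
      exact integral_mono ((hwi k).const_mul _) ((hdψ k).add (hg.const_mul (C k))) (hgrad k)
    have h3 : ∫ x, ψ k x ^ 2 * ((1 / 2 * ‖fderiv ℝ f x‖ ^ 2 + f x) * exp (-f x))
        = (∫ x, ψ k x ^ 2 * (1 / 2 * ‖fderiv ℝ f x‖ ^ 2 * exp (-f x)))
          + ∫ x, ψ k x ^ 2 * (f x * exp (-f x)) := by
      rw [← integral_add (hdψ k) (hfψ k)]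
      congr 1 with x
      ring
    linarith
  have hsqt : ∀ x, Filter.Tendsto (fun k => ψ k x ^ 2) Filter.atTop (nhds 1) := fun x => by
    simpa using (hψt x).pow 2
  have hψm : ∀ k, Measurable fun x => ψ k x ^ 2 := fun k => ((hψc k).pow 2).measurable
  have l1 : Filter.Tendsto
      (fun k => ∫ x, ψ k x ^ 2 * ((1 / 2 * ‖fderiv ℝ f x‖ ^ 2 + f x) * exp (-f x)))
      Filter.atTop (nhds (∫ x, (1 / 2 * ‖fderiv ℝ f x‖ ^ 2 + f x) * exp (-f x))) := by
    refine tendsto_integral_of_dominated_convergence _ (fun k => (hHψ k).aestronglyMeasurable)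
      hH.norm (fun k => Filter.Eventually.of_forall fun x => ?_)
      (Filter.Eventually.of_forall fun x => ?_)
    · rw [norm_mul, norm_of_nonneg (sq_nonneg _)]
      exact mul_le_of_le_one_left (norm_nonneg _) (hψsq k x)
    · simpa using (hsqt x).mul_const ((1 / 2 * ‖fderiv ℝ f x‖ ^ 2 + f x) * exp (-f x))
  have l2 : Filter.Tendsto (fun k => ∫ x, ψ k x ^ 2 * exp (-f x))
      Filter.atTop (nhds (∫ x, exp (-f x))) := by
    refine tendsto_integral_of_dominated_convergence _
      (fun k => (((hψc k).pow 2).mul (by fun_prop)).aestronglyMeasurable)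
      hg (fun k => Filter.Eventually.of_forall fun x => ?_)
      (Filter.Eventually.of_forall fun x => ?_)
    · rw [norm_of_nonneg (by positivity)]
      exact mul_le_of_le_one_left (exp_pos _).le (hψsq k x)
    · simpa using (hsqt x).mul_const (exp (-f x))
  have l3 : Filter.Tendsto (fun k => ∫ x, ψ k x ^ 2 * log (ψ k x ^ 2) * exp (-f x))
      Filter.atTop (nhds (∫ _ : EuclideanSpace ℝ (Fin n), (0 : ℝ))) := by
    refine tendsto_integral_of_dominated_convergence _ (fun k => (hli k).aestronglyMeasurable)
      hg (fun k => Filter.Eventually.of_forall fun x => ?_)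
      (Filter.Eventually.of_forall fun x => ?_)
    · rw [norm_mul, norm_of_nonneg (exp_pos (-f x)).le]
      exact mul_le_of_le_one_left (exp_pos _).le
        (abs_mul_log_le_one (sq_nonneg _) (hψsq k x))
    · have := ((Real.continuous_mul_log.tendsto 1).comp (hsqt x)).mul_const (exp (-f x))
      simpa [Function.comp_def] using this
  have l4 : Filter.Tendsto (fun k => C k * ∫ x, exp (-f x)) Filter.atTop (nhds 0) := by
    have h1 := (((tendsto_one_div_add_atTop_nhds_zero_nat (𝕜 := ℝ)).const_mul K).pow 2).const_mul
      (2 * (c ^ 2 / (1 - c ^ 2)))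
    simpa [hC] using h1.mul_const (∫ x, exp (-f x))
  have l5 := (Real.continuous_mul_log.tendsto (∫ x, exp (-f x))).comp l2
  have hlim := (((l1.add l4).sub l3).add l5).sub (l2.const_mul (n * lsiConst c))
  have := ge_of_tendsto' hlim hmain
  simpa using this

theorem entropy_LSI (n : ℕ) (hn : 0 < n)
    (f : EuclideanSpace ℝ (Fin n) → ℝ)
    (hdiff : Differentiable ℝ f)
    (hint : Integrable (fun x => (1 / 2 * ‖fderiv ℝ f x‖ ^ 2 + f x - n) * Real.exp (-f x))
      (volume : Measure (EuclideanSpace ℝ (Fin n))))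
    (hnorm : (∫ x, Real.exp (-f x)) = (2 * Real.pi) ^ ((n : ℝ) / 2)) :
    0 ≤ ∫ x, (1 / 2 * ‖fderiv ℝ f x‖ ^ 2 + f x - n) * Real.exp (-f x) := by
  have hmpos : 0 < ∫ x, exp (-f x) := by rw [hnorm]; positivity
  -- The integral of a nonintegrable function is `0`, so the normalization forces integrability.
  have hg : Integrable fun x => exp (-f x) := by
    by_contra h
    rw [integral_undef h] at hmpos
    exact lt_irrefl _ hmpos
  have hH : Integrable fun x => (1 / 2 * ‖fderiv ℝ f x‖ ^ 2 + f x) * exp (-f x) :=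
    (hint.add (hg.const_mul n)).congr (Filter.Eventually.of_forall fun x => by
      simp only [Pi.add_apply]; ring)
  have hlogm : log (∫ x, exp (-f x)) = n / 2 * log (2 * π) := by
    rw [hnorm, log_rpow (by positivity)]
  have hsplit : ∫ x, (1 / 2 * ‖fderiv ℝ f x‖ ^ 2 + f x - n) * exp (-f x)
      = (∫ x, (1 / 2 * ‖fderiv ℝ f x‖ ^ 2 + f x) * exp (-f x)) - n * ∫ x, exp (-f x) := by
    rw [← integral_const_mul, ← integral_sub hH (hg.const_mul _)]
    congr 1 with x
    ring
  have hscale : ∀ c : ℝ, 0 < c → c < 1 → n * log c * (∫ x, exp (-f x))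
      ≤ ∫ x, (1 / 2 * ‖fderiv ℝ f x‖ ^ 2 + f x - n) * exp (-f x) := by
    intro c hc hc1
    have h := entropy_LSI_scale hc hc1 n f hdiff hg hH
    rw [hlogm, lsiConst] at h
    rw [hsplit]
    linarith
  have hlim : Filter.Tendsto (fun c : ℝ => n * log c * (∫ x, exp (-f x)))
      (nhdsWithin 1 (Set.Iio 1)) (nhds (n * log 1 * (∫ x, exp (-f x)))) :=
    Filter.Tendsto.mono_left (((continuousAt_log one_ne_zero).const_mul _).mul_const _)
      nhdsWithin_le_nhds
  rw [log_one, mul_zero, zero_mul] at hlim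
  refine le_of_tendsto hlim ?_
  filter_upwards [self_mem_nhdsWithin, nhdsWithin_le_nhds (lt_mem_nhds one_pos)] with c h1 h2
  exact hscale c h2 h1
end
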